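/- arXiv:2204.05633 — 8 statements merged into one kernel-verified Lean document; each statement's English description precedes it below -/
import Mathlib

section
/- Let V : [0,∞) → ℝ be locally integrable, let ξ ∈ ℝ with ξ ≥ 1, and let v be the Neumann solution at ξ. Then for every x > 0 one has |v(x)| ≤ exp( (∫_0^x |V(t)| dt) / √ξ ). -/
open MeasureTheory

/-!
The proof is an energy estimate. Put `E = v² + v'²/ξ`. The equation gives, almost everywhere,
`E' = 2 V v v' / ξ`, the terms `±2 v v'` cancelling, and `2 |v| |v'| / √ξ ≤ E`, so
`E' ≤ (|V| / √ξ) E`. Hence `E · exp (-∫ |V| / √ξ)`, which is absolutely continuous, has a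
nonpositive derivative almost everywhere (`energy_deriv_nonpos`) and does not increase
(`AbsolutelyContinuousOnInterval.le_of_ae_hasDerivAt_nonpos`). Its value at `0` is `1`, so
`v² ≤ E ≤ exp (∫ |V| / √ξ)`, which is at most the square of the claimed bound.
-/

/-- An absolutely continuous function with almost everywhere nonpositive derivative does not
increase, by the fundamental theorem of calculus. -/
theorem AbsolutelyContinuousOnInterval.le_of_ae_hasDerivAt_nonpos {G : ℝ → ℝ} {a b : ℝ}
    (hab : a ≤ b) (hG : AbsolutelyContinuousOnInterval G a b)
    (hG' : ∀ᵐ t, t ∈ Set.uIcc a b → ∃ d ≤ 0, HasDerivAt G d t) : G b ≤ G a := by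
  have h : 0 ≤ ∫ t in a..b, -deriv G t := by
    apply intervalIntegral.integral_nonneg_of_ae_restrict hab
    rw [Filter.EventuallyLE, ae_restrict_iff' measurableSet_Icc]
    filter_upwards [hG'] with t ht hmem
    obtain ⟨d, hd, h⟩ := ht (by rwa [Set.uIcc_of_le hab])
    simpa [h.deriv] using hd
  rw [intervalIntegral.integral_neg, hG.integral_deriv_eq_sub] at h
  linarith

/-- Absolute continuity passes to `exp (-A)` for `A ≥ 0`, since `s ↦ exp (-s)` is `1`-Lipschitz on
`[0, ∞)`. -/
theorem AbsolutelyContinuousOnInterval.exp_neg {A : ℝ → ℝ} {a b : ℝ}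
    (hA : AbsolutelyContinuousOnInterval A a b) (hpos : ∀ t ∈ Set.uIcc a b, 0 ≤ A t) :
    AbsolutelyContinuousOnInterval (fun t => Real.exp (-A t)) a b := by
  have key : ∀ s r : ℝ, 0 ≤ s → s ≤ r → Real.exp (-s) - Real.exp (-r) ≤ r - s := by
    intro s r hs hsr
    have h1 : Real.exp (-r) = Real.exp (-s) * Real.exp (s - r) := by
      rw [← Real.exp_add]; ring_nf
    have h2 : Real.exp (-s) ≤ 1 := Real.exp_le_one_iff.2 (by linarith)
    have h3 := Real.add_one_le_exp (s - r)
    have h4 := Real.exp_pos (-s)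
    rw [h1]
    nlinarith
  have key2 : ∀ s r : ℝ, 0 ≤ s → 0 ≤ r → dist (Real.exp (-s)) (Real.exp (-r)) ≤ dist s r := by
    intro s r hs hr
    rw [Real.dist_eq, Real.dist_eq]
    rcases le_total s r with h | h
    · rw [abs_of_nonneg (sub_nonneg.2 (Real.exp_le_exp.2 (by linarith))),
        abs_of_nonpos (by linarith)]
      linarith [key s r hs h]
    · rw [abs_of_nonpos (sub_nonpos.2 (Real.exp_le_exp.2 (by linarith))),
        abs_of_nonneg (by linarith)]
      linarith [key r s hr h]
  rw [absolutelyContinuousOnInterval_iff] at hA ⊢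
  intro ε hε
  obtain ⟨δ, hδ, h⟩ := hA ε hε
  refine ⟨δ, hδ, fun I hI hsum => lt_of_le_of_lt (Finset.sum_le_sum fun i hi => ?_) (h I hI hsum)⟩
  have hmem := hI.1 i hi
  exact key2 _ _ (hpos _ hmem.1) (hpos _ hmem.2)

/-- The derivative of the weighted energy is nonpositive. Here `y`, `z`, `q` stand for the values
of `v`, `v'`, `V` at a point, `s` for `√ξ`, and `e` for the exponential weight. -/
theorem energy_deriv_nonpos {y z q s e : ℝ} (hs : 0 < s) (he : 0 ≤ e) :
    (2 * y * z + s⁻¹ ^ 2 * (2 * z * ((q - s ^ 2) * y))) * e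
      + (y ^ 2 + s⁻¹ ^ 2 * z ^ 2) * (e * -(s⁻¹ * |q|)) ≤ 0 := by
  have h1 : 2 * y * z + s⁻¹ ^ 2 * (2 * z * ((q - s ^ 2) * y))
      = s⁻¹ * (q * (2 * y * (s⁻¹ * z))) := by
    field_simp
    ring
  have h2 : q * (2 * y * (s⁻¹ * z)) ≤ |q| * (y ^ 2 + (s⁻¹ * z) ^ 2) := by
    refine (le_abs_self _).trans ?_
    rw [abs_mul]
    refine mul_le_mul_of_nonneg_left (abs_le.2 ⟨?_, ?_⟩) (abs_nonneg _)
    · nlinarith [sq_nonneg (y + s⁻¹ * z)]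
    · nlinarith [sq_nonneg (y - s⁻¹ * z)]
  have h3 : 0 ≤ s⁻¹ * e := mul_nonneg (inv_nonneg.2 hs.le) he
  rw [h1]
  nlinarith [mul_le_mul_of_nonneg_left h2 h3]

/-- Let `V : [0,∞) → ℝ` be locally integrable, `ξ ≥ 1`, and let `v` be the
Neumann solution at `ξ` (encoded via the equivalent integral equations: `v`, `vd` are the
function and its derivative, both locally absolutely continuous, with
`-v'' + V v = ξ v` a.e., `v 0 = 1`, `v' 0 = 0`). Then for every `x > 0`,
`|v x| ≤ exp ((∫_0^x |V t| dt) / √ξ)`. -/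
theorem stmt0
    (V : ℝ → ℝ)
    (hV : ∀ x : ℝ, 0 ≤ x → IntervalIntegrable V volume 0 x)
    (ξ : ℝ) (hξ : 1 ≤ ξ)
    (v vd : ℝ → ℝ)
    (hvdInt : ∀ x : ℝ, 0 ≤ x → IntervalIntegrable vd volume 0 x)
    (hodeInt : ∀ x : ℝ, 0 ≤ x →
      IntervalIntegrable (fun t => (V t - ξ) * v t) volume 0 x)
    (hv : ∀ x : ℝ, 0 ≤ x → v x = 1 + ∫ t in (0:ℝ)..x, vd t)
    (hvd : ∀ x : ℝ, 0 ≤ x → vd x = ∫ t in (0:ℝ)..x, (V t - ξ) * v t) :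
    ∀ x : ℝ, 0 < x →
      |v x| ≤ Real.exp ((∫ t in (0:ℝ)..x, |V t|) / Real.sqrt ξ) := by
  intro x hx
  have hx0 := hx.le
  have hξ0 : 0 < ξ := by linarith
  obtain ⟨s, hs, hsξ, rfl⟩ : ∃ s : ℝ, 0 < s ∧ √ξ = s ∧ s ^ 2 = ξ :=
    ⟨√ξ, Real.sqrt_pos.2 hξ0, rfl, Real.sq_sqrt hξ0.le⟩
  rw [hsξ]
  have h0 : (0 : ℝ) ∈ Set.uIcc 0 x := Set.left_mem_uIcc
  -- `v` and `vd` are unconstrained on `(-∞, 0)`; the primitives `y`, `z` agree with them on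
  -- `[0, ∞)` and are differentiable at almost every point of `[0, x]`.
  set y : ℝ → ℝ := fun t => 1 + ∫ r in (0:ℝ)..t, vd r with hy
  set z : ℝ → ℝ := fun t => ∫ r in (0:ℝ)..t, (V r - s ^ 2) * v r with hz
  set A : ℝ → ℝ := fun t => s⁻¹ * ∫ r in (0:ℝ)..t, |V r| with hA
  have hVabs : IntervalIntegrable (fun r => |V r|) volume 0 x := (hV x hx0).abs
  have acy : AbsolutelyContinuousOnInterval y 0 x :=
    (LipschitzWith.const (1:ℝ)).lipschitzOnWith.absolutelyContinuousOnInterval.fun_add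
      ((hvdInt x hx0).absolutelyContinuousOnInterval_intervalIntegral h0)
  have acz : AbsolutelyContinuousOnInterval z 0 x :=
    (hodeInt x hx0).absolutelyContinuousOnInterval_intervalIntegral h0
  have acA : AbsolutelyContinuousOnInterval A 0 x :=
    (hVabs.absolutelyContinuousOnInterval_intervalIntegral h0).const_mul _
  have hApos : ∀ t, 0 ≤ t → 0 ≤ A t := fun t ht =>
    mul_nonneg (inv_nonneg.2 hs.le)
      (intervalIntegral.integral_nonneg ht fun _ _ => abs_nonneg _)
  have acG : AbsolutelyContinuousOnInterval
      (fun t => (y t * y t + s⁻¹ ^ 2 * (z t * z t)) * Real.exp (-A t)) 0 x :=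
    ((acy.fun_mul acy).fun_add ((acz.fun_mul acz).const_mul _)).fun_mul
      (acA.exp_neg fun t ht => hApos t (by rw [Set.uIcc_of_le hx0] at ht; exact ht.1))
  have hle := acG.le_of_ae_hasDerivAt_nonpos hx0 (by
    filter_upwards [(hvdInt x hx0).ae_hasDerivAt_integral, (hodeInt x hx0).ae_hasDerivAt_integral,
      hVabs.ae_hasDerivAt_integral] with t h1 h2 h3 ht
    have ht0 : 0 ≤ t := by rw [Set.uIcc_of_le hx0] at ht; exact ht.1
    have dy : HasDerivAt y (z t) t := by
      have h := (h1 ht 0 h0).const_add 1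
      rwa [hvd t ht0] at h
    have dz : HasDerivAt z ((V t - s ^ 2) * y t) t := by
      have h := h2 ht 0 h0
      rwa [hv t ht0] at h
    have dA : HasDerivAt A (s⁻¹ * |V t|) t := (h3 ht 0 h0).const_mul _
    refine ⟨_, ?_, ((dy.mul dy).add ((dz.mul dz).const_mul (s⁻¹ ^ 2))).mul dA.neg.exp⟩
    refine le_of_eq_of_le ?_ (energy_deriv_nonpos (y := y t) (z := z t) (q := V t) hs
      (Real.exp_pos (-A t)).le)
    simp only [Pi.add_apply, Pi.mul_apply, Pi.neg_apply]
    ring)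
  have hG0 : (y 0 * y 0 + s⁻¹ ^ 2 * (z 0 * z 0)) * Real.exp (-A 0) = 1 := by simp [hy, hz, hA]
  have hvy : v x = y x := hv x hx0
  have hAx : (∫ t in (0:ℝ)..x, |V t|) / s = A x := by rw [hA, div_eq_inv_mul]
  rw [hvy, hAx]
  beta_reduce at hle
  rw [hG0, Real.exp_neg, ← div_eq_mul_inv, div_le_one (Real.exp_pos _)] at hle
  have hone : 1 ≤ Real.exp (A x) := Real.one_le_exp (hApos x hx0)
  refine abs_le_of_sq_le_sq ?_ (Real.exp_pos _).le
  nlinarith [mul_nonneg (sq_nonneg s⁻¹) (mul_self_nonneg (z x))]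
end

section
/- Let X be a compact metric space and let G : X × X → [0,∞] be continuous as a map into the extended nonnegative reals. Let (ν_n) be a sequence of finite Borel measures on X converging weakly to a finite Borel measure ν, and let (z_n) be a sequence in X converging to z ∈ X. Then liminf_{n→∞} ∫_X G(z_n, t) dν_n(t) ≥ ∫_X G(z, t) dν(t). -/
/-!
The truncations `min G M` are bounded and continuous on the compact space `X × X`, so the sections
`t ↦ min (G (z n, t)) M` converge uniformly to `t ↦ min (G (zlim, t)) M`. Since weak convergence
also gives convergence of the total masses, the truncated integrals converge
(`tendsto_integral_section`). Each truncated integral at stage `n` is at most `∫⁻ G (z n, t)`, which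
yields the inequality with `min G M` on the left, and monotone convergence in `M` removes the
truncation.
-/

open MeasureTheory Filter
open scoped ENNReal

/-- Finite continuous kernels may be integrated in the limit even though both the measure and the
first argument vary: the sections converge uniformly and the masses stay bounded. -/
theorem tendsto_integral_section
    {X : Type*} [MetricSpace X] [CompactSpace X] [MeasurableSpace X] [BorelSpace X]
    (F : C(X × X, ℝ)) (ν : ℕ → Measure X) (νlim : Measure X)
    [∀ n, IsFiniteMeasure (ν n)]
    (hweak : ∀ f : C(X, ℝ),
      Tendsto (fun n => ∫ x, f x ∂(ν n)) atTop (nhds (∫ x, f x ∂νlim)))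
    (z : ℕ → X) (zlim : X) (hz : Tendsto z atTop (nhds zlim)) :
    Tendsto (fun n => ∫ t, F (z n, t) ∂(ν n)) atTop (nhds (∫ t, F (zlim, t) ∂νlim)) := by
  have hmass : Tendsto (fun n => (ν n).real Set.univ) atTop (nhds (νlim.real Set.univ)) := by
    simpa using hweak 1
  -- Continuity of the curried map into `C(X, ℝ)` is uniform convergence of the sections.
  have hcurry : Tendsto (fun n => ‖F.curry (z n) - F.curry zlim‖) atTop (nhds 0) :=
    tendsto_iff_norm_sub_tendsto_zero.mp ((F.curry.continuous.tendsto zlim).comp hz)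
  have hint : ∀ (f : C(X, ℝ)) (n : ℕ), Integrable f (ν n) := fun f n =>
    f.continuous.integrable_of_hasCompactSupport (HasCompactSupport.of_compactSpace f)
  have hdiff : Tendsto (fun n => ∫ t, (F.curry (z n) - F.curry zlim) t ∂(ν n)) atTop (nhds 0) := by
    refine squeeze_zero_norm (fun n => ?_) (by simpa using hcurry.mul hmass)
    exact norm_integral_le_of_norm_le_const
      (Eventually.of_forall fun t => ContinuousMap.norm_coe_le_norm _ t)
  have hsum := hdiff.add (hweak (F.curry zlim))
  rw [zero_add] at hsum
  refine hsum.congr fun n => ?_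
  rw [← integral_add (hint _ n) (hint _ n)]
  simp

/-- principle of descent. Let `X` be a compact metric space and
`G : X × X → [0,∞]` continuous (into the extended nonnegative reals). Let `(ν n)` be
finite Borel measures converging weakly to the finite Borel measure `νlim`, and `z n → zlim`
in `X`. Then `liminf_n ∫ G (z n, t) dν n (t) ≥ ∫ G (zlim, t) dνlim (t)`. -/
theorem stmt2
    {X : Type*} [MetricSpace X] [CompactSpace X] [MeasurableSpace X] [BorelSpace X]
    (G : X × X → ℝ≥0∞) (hG : Continuous G)
    (ν : ℕ → Measure X) (νlim : Measure X)
    [∀ n, IsFiniteMeasure (ν n)] [IsFiniteMeasure νlim]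
    (hweak : ∀ f : C(X, ℝ),
      Tendsto (fun n => ∫ x, f x ∂(ν n)) atTop (nhds (∫ x, f x ∂νlim)))
    (z : ℕ → X) (zlim : X) (hz : Tendsto z atTop (nhds zlim)) :
    ∫⁻ t, G (zlim, t) ∂νlim ≤ liminf (fun n => ∫⁻ t, G (z n, t) ∂(ν n)) atTop := by
  have htop : ∀ (M : ℕ) (p : X × X), min (G p) (M : ℝ≥0∞) ≠ ∞ := fun M p =>
    ((min_le_right _ _).trans_lt (ENNReal.natCast_lt_top M)).ne
  have hmin : ∀ M : ℕ, Continuous fun p => min (G p) (M : ℝ≥0∞) := fun M =>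
    hG.min continuous_const
  have key : ∀ M : ℕ, ∫⁻ t, min (G (zlim, t)) (M : ℝ≥0∞) ∂νlim
      ≤ liminf (fun n => ∫⁻ t, G (z n, t) ∂(ν n)) atTop := by
    intro M
    let F : C(X × X, ℝ) := ⟨fun p => (min (G p) (M : ℝ≥0∞)).toReal,
      ENNReal.continuousOn_toReal.comp_continuous (hmin M) (htop M)⟩
    have hF : ∀ (μ : Measure X) [IsFiniteMeasure μ] (x : X),
        ENNReal.ofReal (∫ t, F (x, t) ∂μ) = ∫⁻ t, min (G (x, t)) (M : ℝ≥0∞) ∂μ := by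
      intro μ _ x
      have hc : Continuous fun t => F (x, t) := by fun_prop
      rw [ofReal_integral_eq_lintegral_ofReal
        (hc.integrable_of_hasCompactSupport (HasCompactSupport.of_compactSpace _))
        (Eventually.of_forall fun t => ENNReal.toReal_nonneg)]
      exact lintegral_congr fun t => ENNReal.ofReal_toReal (htop M (x, t))
    have hlim := ENNReal.tendsto_ofReal (tendsto_integral_section F ν νlim hweak z zlim hz)
    simp only [hF] at hlim
    rw [← hlim.liminf_eq]
    exact liminf_le_liminf
      (Eventually.of_forall fun n => lintegral_mono fun t => min_le_left _ _)
  have hsup : ∀ a : ℝ≥0∞, ⨆ M : ℕ, min a (M : ℝ≥0∞) = a := fun a => by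
    rw [← inf_iSup_eq, ENNReal.iSup_natCast, inf_top_eq]
  calc ∫⁻ t, G (zlim, t) ∂νlim
      = ∫⁻ t, ⨆ M : ℕ, min (G (zlim, t)) (M : ℝ≥0∞) ∂νlim := by simp only [hsup]
    _ = ⨆ M : ℕ, ∫⁻ t, min (G (zlim, t)) (M : ℝ≥0∞) ∂νlim :=
        lintegral_iSup (fun M => ((hmin M).comp (Continuous.prodMk_right zlim)).measurable)
          fun a b hab t => min_le_min_left _ (Nat.cast_le.mpr hab)
    _ ≤ _ := iSup_le key
end

section
/- Let N ∈ (0,∞], let A, B : [0,N) → Mat₂(ℂ) be locally integrable with A(x) Hermitian positive semidefinite and B(x) Hermitian for almost every x, and for z ∈ ℂ let T(·,z) be the transfer matrix of the canonical system. Then for every z ∈ ℂ with Im z > 0 and all 0 ≤ x₁ ≤ x₂ < N, the matrix i·( T(x₂,z)* · j · T(x₂,z) − T(x₁,z)* · j · T(x₁,z) ) is Hermitian positive semidefinite (j-monotonicity of the transfer matrix family). -/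
/-! The derivative of `x ↦ T(x)ᴴ j T(x)` is `-2i (Im z) T(x)ᴴ A(x) T(x)` almost everywhere: the
contributions of `B` and of `Re z` cancel, because `A`, `B` are Hermitian and `jᴴ = -j`. Multiplying by `i` gives a
positive semidefinite derivative.

To integrate this inequality, fix a vector `v` and put `u(x) = T(x) v`. The real number
`F(x) = i u(x)ᴴ j u(x)` (`jForm`) is a quadratic polynomial in the real and imaginary parts of the
entries of `u`. These are indefinite integrals of integrable functions, so `F` is absolutely
continuous, and its a.e. derivative is `2 (Im z) u(x)ᴴ A(x) u(x) ≥ 0`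
(`jForm_deriv_nonneg`). The fundamental theorem of calculus for absolutely continuous functions
(`jForm_mono`) yields `F(x₁) ≤ F(x₂)`. -/

open MeasureTheory Matrix
open scoped ENNReal ComplexOrder

/-- The matrix `j = [[0,-1],[1,0]]`. -/
noncomputable def Jmat : Matrix (Fin 2) (Fin 2) ℂ := !![0, -1; 1, 0]

/-- The Hermitian form `i uᴴ j u` on `ℂ²`, written as a real polynomial in the real and imaginary
parts of the entries of `u`; see `dotProduct_jForm`. -/
noncomputable def jForm (u : Fin 2 → ℂ) : ℝ :=
  2 * ((u 0).re * (u 1).im - (u 0).im * (u 1).re)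

/-- The polarization `2 Re (i uᴴ j w)`: the derivative of `jForm` at `u` in direction `w`. -/
noncomputable def jFormDeriv (u w : Fin 2 → ℂ) : ℝ :=
  2 * (((w 0).re * (u 1).im + (u 0).re * (w 1).im)
    - ((w 0).im * (u 1).re + (u 0).im * (w 1).re))

lemma dotProduct_jForm (S : Matrix (Fin 2) (Fin 2) ℂ) (v : Fin 2 → ℂ) :
    star v ⬝ᵥ ((Complex.I • (Sᴴ * Jmat * S)) *ᵥ v) = (jForm (S *ᵥ v) : ℂ) := by
  have h : star v ⬝ᵥ ((Complex.I • (Sᴴ * Jmat * S)) *ᵥ v)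
      = Complex.I * (star (S *ᵥ v) ⬝ᵥ (Jmat *ᵥ (S *ᵥ v))) := by
    rw [smul_mulVec, dotProduct_smul, smul_eq_mul, star_mulVec, dotProduct_mulVec,
      dotProduct_mulVec, dotProduct_mulVec, vecMul_vecMul, vecMul_vecMul, ← Matrix.mul_assoc]
  rw [h]
  generalize S *ᵥ v = u
  apply Complex.ext <;>
    simp [jForm, Jmat, dotProduct, mulVec, Fin.sum_univ_two] <;> ring

lemma isHermitian_I_smul (S : Matrix (Fin 2) (Fin 2) ℂ) :
    (Complex.I • (Sᴴ * Jmat * S)).IsHermitian := by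
  have hJ : (Complex.I • Jmat).IsHermitian := by
    ext i j
    fin_cases i <;> fin_cases j <;> simp [Jmat]
  have := isHermitian_conjTranspose_mul_mul S hJ
  simpa using this

/-- Along a solution, `w = u'` satisfies `j w = (-z A + B) u`, and then
`2 Re (i uᴴ j w) = 2 (Im z) uᴴ A u`. -/
lemma jForm_deriv_nonneg {A B : Matrix (Fin 2) (Fin 2) ℂ} (hA : A.PosSemidef)
    (hB : B.IsHermitian) {z : ℂ} (hz : 0 < z.im) (u : Fin 2 → ℂ) :
    0 ≤ jFormDeriv u ((-Jmat * (-z • A + B)) *ᵥ u) := by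
  have key : jFormDeriv u ((-Jmat * (-z • A + B)) *ᵥ u)
      = 2 * z.im * (star u ⬝ᵥ (A *ᵥ u)).re := by
    have a00 := hA.1.apply 0 0
    have a01 := hA.1.apply 0 1
    have b00 := hB.apply 0 0
    have b01 := hB.apply 0 1
    have a11 := hA.1.apply 1 1
    have b11 := hB.apply 1 1
    have a0 : (A 0 0).im = 0 := Complex.conj_eq_iff_im.1 a00
    have a1 : (A 1 1).im = 0 := Complex.conj_eq_iff_im.1 a11
    have b0 : (B 0 0).im = 0 := Complex.conj_eq_iff_im.1 b00
    have b1 : (B 1 1).im = 0 := Complex.conj_eq_iff_im.1 b11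
    simp [jFormDeriv, Jmat, dotProduct, mulVec, Fin.sum_univ_two, Matrix.mul_apply, a0, a1, b0, b1,
      ← a01, ← b01]
    ring
  rw [key]
  have h := (Complex.le_def.1 (hA.dotProduct_mulVec_nonneg u)).1
  rw [Complex.zero_re] at h
  positivity

lemma ac_const_add_integral {f : ℝ → ℝ} {b : ℝ} (c : ℝ)
    (hf : IntervalIntegrable f volume 0 b) :
    AbsolutelyContinuousOnInterval (fun x => c + ∫ s in (0:ℝ)..x, f s) 0 b := by
  have h1 := hf.absolutelyContinuousOnInterval_intervalIntegral (c := 0) (by simp)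
  have h2 : AbsolutelyContinuousOnInterval (fun _ : ℝ => c) 0 b :=
    (contDiff_const.contDiffOn).absolutelyContinuousOnInterval
  exact h2.fun_add h1

/-- If `u` is an indefinite integral of `g` and `jForm` has nonnegative derivative at `u` in
direction `g` almost everywhere, then `jForm ∘ u` increases, since it is absolutely continuous. -/
lemma jForm_mono {g : ℝ → Fin 2 → ℂ} {v : Fin 2 → ℂ} {u : ℝ → Fin 2 → ℂ} {a b : ℝ}
    (ha : 0 ≤ a) (hab : a ≤ b)
    (hg : ∀ i, IntervalIntegrable (fun s => g s i) volume 0 b)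
    (hu : ∀ x, 0 ≤ x → x ≤ b → ∀ i, u x i = v i + ∫ s in (0:ℝ)..x, g s i)
    (hpos : ∀ᵐ x, x ∈ Set.Icc 0 b → 0 ≤ jFormDeriv (u x) (g x)) :
    jForm (u a) ≤ jForm (u b) := by
  have hb : 0 ≤ b := ha.trans hab
  have hre : ∀ i, IntervalIntegrable (fun s => (g s i).re) volume 0 b := fun i =>
    ⟨(hg i).1.re, (hg i).2.re⟩
  have him : ∀ i, IntervalIntegrable (fun s => (g s i).im) volume 0 b := fun i =>
    ⟨(hg i).1.im, (hg i).2.im⟩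
  -- `R` and `M` extend the real and imaginary parts of `u` from `[0,b]` to the whole line.
  let R : Fin 2 → ℝ → ℝ := fun i x => (v i).re + ∫ s in (0:ℝ)..x, (g s i).re
  let M : Fin 2 → ℝ → ℝ := fun i x => (v i).im + ∫ s in (0:ℝ)..x, (g s i).im
  have hsub : ∀ i x, 0 ≤ x → x ≤ b → IntervalIntegrable (fun s => g s i) volume 0 x :=
    fun i x h0 h1 => (hg i).mono_set (by
      rw [Set.uIcc_of_le h0, Set.uIcc_of_le hb]; exact Set.Icc_subset_Icc_right h1)
  have hR : ∀ i x, 0 ≤ x → x ≤ b → (u x i).re = R i x := fun i x h0 h1 => by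
    rw [hu x h0 h1 i, Complex.add_re]
    congr 1
    exact (Complex.reCLM.intervalIntegral_comp_comm (hsub i x h0 h1)).symm
  have hM : ∀ i x, 0 ≤ x → x ≤ b → (u x i).im = M i x := fun i x h0 h1 => by
    rw [hu x h0 h1 i, Complex.add_im]
    congr 1
    exact (Complex.imCLM.intervalIntegral_comp_comm (hsub i x h0 h1)).symm
  have hRac : ∀ i, AbsolutelyContinuousOnInterval (R i) 0 b := fun i =>
    ac_const_add_integral _ (hre i)
  have hMac : ∀ i, AbsolutelyContinuousOnInterval (M i) 0 b := fun i =>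
    ac_const_add_integral _ (him i)
  let F : ℝ → ℝ := fun x => 2 * (R 0 x * M 1 x - M 0 x * R 1 x)
  have hF : ∀ x, 0 ≤ x → x ≤ b → jForm (u x) = F x := fun x h0 h1 => by
    simp only [jForm, F, hR _ x h0 h1, hM _ x h0 h1]
  have hFac : AbsolutelyContinuousOnInterval F 0 b :=
    (((hRac 0).fun_mul (hMac 1)).fun_sub ((hMac 0).fun_mul (hRac 1))).const_mul 2
  have hFac' : AbsolutelyContinuousOnInterval F a b := hFac.mono (by
    rw [Set.uIcc_of_le hab, Set.uIcc_of_le hb]; exact Set.Icc_subset_Icc_left ha)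
  have hder : ∀ᵐ x, x ∈ Set.Icc 0 b → 0 ≤ deriv F x := by
    filter_upwards [hpos, (hre 0).ae_hasDerivAt_integral, (hre 1).ae_hasDerivAt_integral,
      (him 0).ae_hasDerivAt_integral, (him 1).ae_hasDerivAt_integral] with x hx r0 r1 m0 m1 hxb
    have hxu : x ∈ Set.uIcc 0 b := by rwa [Set.uIcc_of_le hb]
    have r0' : HasDerivAt (R 0) (g x 0).re x := (r0 hxu 0 (by simp)).const_add _
    have r1' : HasDerivAt (R 1) (g x 1).re x := (r1 hxu 0 (by simp)).const_add _
    have m0' : HasDerivAt (M 0) (g x 0).im x := (m0 hxu 0 (by simp)).const_add _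
    have m1' : HasDerivAt (M 1) (g x 1).im x := (m1 hxu 0 (by simp)).const_add _
    have hd : HasDerivAt F _ x := ((r0'.fun_mul m1').fun_sub (m0'.fun_mul r1')).const_mul 2
    rw [hd.deriv, ← hR 0 x hxb.1 hxb.2, ← hR 1 x hxb.1 hxb.2, ← hM 0 x hxb.1 hxb.2,
      ← hM 1 x hxb.1 hxb.2]
    exact hx hxb
  have hint := hFac'.integral_deriv_eq_sub
  have hnn : 0 ≤ ∫ x in a..b, deriv F x := by
    apply intervalIntegral.integral_nonneg_of_ae_restrict hab
    rw [Filter.EventuallyLE, ae_restrict_iff' measurableSet_Icc]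
    filter_upwards [hder] with x hx hxm
    exact hx ⟨ha.trans hxm.1, hxm.2⟩
  rw [hF a ha hab, hF b hb le_rfl]
  linarith

/-- `j`-monotonicity. For a canonical system on `[0,N)` with coefficient
functions `A` (Hermitian positive semidefinite a.e.) and `B` (Hermitian a.e.), locally
integrable, and transfer matrix `T(·,z)` (encoded via the equivalent integral equation),
for every `z` with `Im z > 0` and `0 ≤ x₁ ≤ x₂ < N`, the matrix
`i (T(x₂,z)ᴴ j T(x₂,z) - T(x₁,z)ᴴ j T(x₁,z))` is Hermitian positive semidefinite. -/
theorem stmt8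
    (N : ℝ≥0∞) (hN : 0 < N)
    (A B : ℝ → Matrix (Fin 2) (Fin 2) ℂ)
    (hAint : ∀ (i k : Fin 2) (x : ℝ), 0 ≤ x → ENNReal.ofReal x < N →
      IntervalIntegrable (fun s => A s i k) volume 0 x)
    (hBint : ∀ (i k : Fin 2) (x : ℝ), 0 ≤ x → ENNReal.ofReal x < N →
      IntervalIntegrable (fun s => B s i k) volume 0 x)
    (hApsd : ∀ᵐ x ∂(volume.restrict {x : ℝ | 0 ≤ x ∧ ENNReal.ofReal x < N}),
      (A x).PosSemidef)
    (hBherm : ∀ᵐ x ∂(volume.restrict {x : ℝ | 0 ≤ x ∧ ENNReal.ofReal x < N}),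
      (B x).IsHermitian)
    (T : ℝ → ℂ → Matrix (Fin 2) (Fin 2) ℂ)
    (hT0 : ∀ z : ℂ, T 0 z = 1)
    (hTint : ∀ (z : ℂ) (x : ℝ), 0 ≤ x → ENNReal.ofReal x < N → ∀ i k : Fin 2,
      IntervalIntegrable
        (fun s => ((-Jmat) * ((-z • A s + B s) * T s z)) i k) volume 0 x)
    (hT : ∀ (z : ℂ) (x : ℝ), 0 ≤ x → ENNReal.ofReal x < N → ∀ i k : Fin 2,
      T x z i k = (1 : Matrix (Fin 2) (Fin 2) ℂ) i k
        + ∫ s in (0:ℝ)..x, ((-Jmat) * ((-z • A s + B s) * T s z)) i k)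
    (z : ℂ) (hz : 0 < z.im)
    (x₁ x₂ : ℝ) (hx₁ : 0 ≤ x₁) (hx₁₂ : x₁ ≤ x₂) (hx₂N : ENNReal.ofReal x₂ < N) :
    (Complex.I • ((T x₂ z)ᴴ * Jmat * T x₂ z - (T x₁ z)ᴴ * Jmat * T x₁ z)).PosSemidef := by
  have hN' : ∀ x, x ≤ x₂ → ENNReal.ofReal x < N := fun x hx =>
    (ENNReal.ofReal_le_ofReal hx).trans_lt hx₂N
  have hx₂ : 0 ≤ x₂ := hx₁.trans hx₁₂
  rw [smul_sub]
  refine .of_dotProduct_mulVec_nonneg ((isHermitian_I_smul _).sub (isHermitian_I_smul _))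
    fun v => ?_
  rw [sub_mulVec, dotProduct_sub, dotProduct_jForm, dotProduct_jForm, sub_nonneg]
  rw [Complex.real_le_real]
  have hint : ∀ x, 0 ≤ x → x ≤ x₂ → ∀ i k : Fin 2, IntervalIntegrable
      (fun s => ((-Jmat) * ((-z • A s + B s) * T s z)) i k * v k) volume 0 x :=
    fun x h0 h1 i k => (hTint z x h0 (hN' x h1) i k).mul_const _
  refine jForm_mono (g := fun s => ((-Jmat) * ((-z • A s + B s) * T s z)) *ᵥ v) (v := v)
    (u := fun x => T x z *ᵥ v) hx₁ hx₁₂ ?_ ?_ ?_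
  · intro i
    simp only [mulVec, dotProduct, Fin.sum_univ_two]
    exact (hint x₂ hx₂ le_rfl i 0).add (hint x₂ hx₂ le_rfl i 1)
  · intro x h0 h1 i
    simp only [mulVec, dotProduct, Fin.sum_univ_two]
    rw [intervalIntegral.integral_add (hint x h0 h1 i 0) (hint x h0 h1 i 1),
      intervalIntegral.integral_mul_const, intervalIntegral.integral_mul_const,
      hT z x h0 (hN' x h1) i 0, hT z x h0 (hN' x h1) i 1]
    have h1v : (1 : Matrix (Fin 2) (Fin 2) ℂ) i 0 * v 0
        + (1 : Matrix (Fin 2) (Fin 2) ℂ) i 1 * v 1 = v i := by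
      fin_cases i <;> simp [Matrix.one_apply]
    rw [← h1v]
    ring
  · have hmeas : MeasurableSet {x : ℝ | 0 ≤ x ∧ ENNReal.ofReal x < N} :=
      measurableSet_Ici.inter (measurableSet_lt ENNReal.measurable_ofReal measurable_const)
    rw [ae_restrict_iff' hmeas] at hApsd hBherm
    filter_upwards [hApsd, hBherm] with x hA hB hx
    have hm : x ∈ {x : ℝ | 0 ≤ x ∧ ENNReal.ofReal x < N} := ⟨hx.1, hN' x hx.2⟩
    have := jForm_deriv_nonneg (hA hm) (hB hm) hz (T x z *ᵥ v)
    rwa [mulVec_mulVec, Matrix.mul_assoc] at this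
end

section
/- Let u₀ be the unique solution of tan(2u₀) = 2u₀ with 2u₀ ∈ (π, 3π/2) (the first positive root of tan(2u) − 2u), and define G : ℝ → ℝ by G(u) = sin(u−u₀)/(u−u₀) + sin(u+u₀)/(u+u₀), where the singular terms are extended continuously by the value 1 at u = u₀ and u = −u₀ respectively. Then G is an even function and |G(u)| ≤ G(u₀) for every u ∈ ℝ; i.e. |G| attains its global maximum at ±u₀. -/
/-!
Write `a = 2u₀`, `m = -cos a`, so that `sin a = -a m` and `m² (1 + a²) = 1`, and put `t = u - u₀`.
Then `G(u) = sinc t + sinc (t + a)` and `G(u₀) = 1 - m`.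

The lower bound `G ≥ -2m ≥ -(1 - m)` holds because `-m = sinc a` is the global minimum of `sinc`
(`neg_le_sinc`) and `m < 1/3`.

For the upper bound, evenness allows `u ≥ 0`, that is `t ≥ -a/2`. Expanding `sin (t + a)` turns
`G(u) ≤ 1 - m` into
`m a (1 - cos t) ≤ (1 - sinc t) (a + (1 - m) t)`.
For `t ≥ 0` this follows from the Cusa–Huygens inequality `1 - cos t ≤ 3 (1 - sinc t)` (`cusa`) and
`m < 1/3`. For `t = -s` with `0 < s ≤ a/2` the factor `a - (1 - m) s` loses up to
`(1 - m)/2` of `a`, which is compensated by the growth of the ratio `(1 - sinc s) / (1 - cos s)`;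
this ratio is bounded below by Taylor polynomials. The numerical input is `a ≥ 4.319`, obtained from
`cos (2a) = (1 - a²) / (1 + a²) < cos (3π/4)`.
-/

/-- The function `G(u) = sin(u-u₀)/(u-u₀) + sin(u+u₀)/(u+u₀)`, with the singular terms
extended continuously by the value `1` at `u = u₀` and `u = -u₀` respectively. -/
noncomputable def G11 (u₀ u : ℝ) : ℝ :=
  (if u = u₀ then 1 else Real.sin (u - u₀) / (u - u₀))
    + (if u = -u₀ then 1 else Real.sin (u + u₀) / (u + u₀))

/-! ### Taylor bounds and Cusa–Huygens -/

lemma nonneg_of_deriv_nonneg (f f' : ℝ → ℝ) (hf : ∀ x, HasDerivAt f (f' x) x) (h0 : f 0 = 0)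
    (hf' : ∀ x, 0 ≤ x → 0 ≤ f' x) (x : ℝ) (hx : 0 ≤ x) : 0 ≤ f x := by
  have hm : MonotoneOn f (Set.Ici 0) := by
    apply monotoneOn_of_deriv_nonneg (convex_Ici 0)
    · exact fun y _ => (hf y).continuousAt.continuousWithinAt
    · exact fun y _ => (hf y).differentiableAt.differentiableWithinAt
    · intro y hy
      rw [(hf y).deriv]
      simp only [interior_Ici, Set.mem_Ioi] at hy
      exact hf' y hy.le
  have := hm (Set.mem_Ici.2 le_rfl) (Set.mem_Ici.2 hx) hx
  linarith

lemma sin_ge_taylor3 (x : ℝ) (hx : 0 ≤ x) : x - x ^ 3 / 6 ≤ Real.sin x := by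
  have := nonneg_of_deriv_nonneg (fun x => Real.sin x - (x - x ^ 3 / 6))
    (fun x => Real.cos x - (1 - x ^ 2 / 2)) (fun y => by
      refine ((Real.hasDerivAt_sin y).sub
        ((hasDerivAt_id y).sub ((hasDerivAt_pow 3 y).div_const 6))).congr_deriv ?_
      norm_num
      ring) (by simp)
    (fun y _ => by linarith [Real.one_sub_sq_div_two_le_cos (x := y)]) x hx
  linarith

lemma cos_le_taylor4 (x : ℝ) (hx : 0 ≤ x) : Real.cos x ≤ 1 - x ^ 2 / 2 + x ^ 4 / 24 := by
  have := nonneg_of_deriv_nonneg (fun x => 1 - x ^ 2 / 2 + x ^ 4 / 24 - Real.cos x)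
    (fun x => Real.sin x - (x - x ^ 3 / 6)) (fun y => by
      refine (((((hasDerivAt_pow 2 y).div_const 2).const_sub 1).add
        ((hasDerivAt_pow 4 y).div_const 24)).sub (Real.hasDerivAt_cos y)).congr_deriv ?_
      norm_num
      ring) (by simp)
    (fun y hy => by linarith [sin_ge_taylor3 y hy]) x hx
  linarith

lemma sin_le_taylor5 (x : ℝ) (hx : 0 ≤ x) : Real.sin x ≤ x - x ^ 3 / 6 + x ^ 5 / 120 := by
  have := nonneg_of_deriv_nonneg (fun x => x - x ^ 3 / 6 + x ^ 5 / 120 - Real.sin x)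
    (fun x => 1 - x ^ 2 / 2 + x ^ 4 / 24 - Real.cos x) (fun y => by
      refine ((((hasDerivAt_id y).sub ((hasDerivAt_pow 3 y).div_const 6)).add
        ((hasDerivAt_pow 5 y).div_const 120)).sub (Real.hasDerivAt_sin y)).congr_deriv ?_
      norm_num
      ring) (by simp)
    (fun y hy => by linarith [cos_le_taylor4 y hy]) x hx
  linarith

lemma cos_ge_taylor6 (x : ℝ) (hx : 0 ≤ x) :
    1 - x ^ 2 / 2 + x ^ 4 / 24 - x ^ 6 / 720 ≤ Real.cos x := by
  have := nonneg_of_deriv_nonneg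
    (fun x => Real.cos x - (1 - x ^ 2 / 2 + x ^ 4 / 24 - x ^ 6 / 720))
    (fun x => x - x ^ 3 / 6 + x ^ 5 / 120 - Real.sin x) (fun y => by
      refine ((Real.hasDerivAt_cos y).sub (((((hasDerivAt_pow 2 y).div_const 2).const_sub 1).add
        ((hasDerivAt_pow 4 y).div_const 24)).sub
        ((hasDerivAt_pow 6 y).div_const 720))).congr_deriv ?_
      norm_num
      ring) (by simp)
    (fun y hy => by linarith [sin_le_taylor5 y hy]) x hx
  linarith

lemma sinc_le_taylor4 (s : ℝ) (hs : 0 < s) : Real.sinc s ≤ 1 - s ^ 2 / 6 + s ^ 4 / 120 := by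
  rw [Real.sinc_of_ne_zero hs.ne', div_le_iff₀ hs]
  linarith [sin_le_taylor5 s hs.le]

/-- Lower bound on the ratio `(1 - sinc s) / (1 - cos s)` by that of the Taylor polynomials. -/
lemma ratio_bound (k s : ℝ) (hk : 0 ≤ k) (hs : 0 < s)
    (h : k * (360 - 30 * s ^ 2 + (s ^ 2) ^ 2) ≤ 120 - 6 * s ^ 2) :
    k * (1 - Real.cos s) ≤ 1 - Real.sinc s := by
  have h1 := sinc_le_taylor4 s hs
  have h2 := mul_le_mul_of_nonneg_left (cos_ge_taylor6 s hs.le) hk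
  have h3 := mul_le_mul_of_nonneg_left h (sq_nonneg s)
  nlinarith

/-- The Cusa–Huygens inequality `3 sinc s ≤ 2 + cos s`. -/
lemma cusa (s : ℝ) (hs : 0 < s) : 1 / 3 * (1 - Real.cos s) ≤ 1 - Real.sinc s := by
  by_cases h : s ≤ 3
  · apply ratio_bound _ _ (by norm_num) hs
    have : s ^ 2 ≤ 9 := by nlinarith
    nlinarith [sq_nonneg s]
  · have : Real.sinc s ≤ 1 / 3 := by
      rw [Real.sinc_of_ne_zero hs.ne', div_le_iff₀ hs]
      linarith [Real.sin_le_one s]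
    linarith [Real.neg_one_le_cos s]

/-! ### The root and the bounds on `sinc t + sinc (t + a)` -/

/-- `sinc` is bounded below by its critical value `-m = sinc a`. -/
lemma neg_le_sinc (a m : ℝ) (ha : a ∈ Set.Ioo Real.pi (3 * Real.pi / 2)) (hm : 0 < m)
    (hc : Real.cos a = -m) (hs : Real.sin a = -(a * m)) (x : ℝ) : -m ≤ Real.sinc x := by
  obtain ⟨ha1, ha2⟩ := ha
  have hpi := Real.pi_pos
  have key : ∀ y : ℝ, 0 < y → -m ≤ Real.sinc y := by
    intro y hy
    rw [Real.sinc_of_ne_zero hy.ne', le_div_iff₀ hy]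
    by_cases hyp : y ≤ Real.pi
    · nlinarith [Real.sin_nonneg_of_nonneg_of_le_pi hy.le hyp]
    · push Not at hyp
      obtain ⟨d, rfl⟩ : ∃ d, y = a + d := ⟨y - a, by ring⟩
      rw [Real.sin_add, hs, hc]
      have : 0 ≤ a * (1 - Real.cos d) + (d - Real.sin d) := by
        rcases le_total 0 d with hd | hd
        · nlinarith [Real.sin_le hd, Real.cos_le_one d]
        · obtain ⟨e, rfl⟩ : ∃ e, d = -e := ⟨-d, by ring⟩
          rw [Real.cos_neg, Real.sin_neg]
          have he : 0 ≤ e := by linarith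
          have he2 : e < Real.pi / 2 := by linarith
          have hce : 0 < Real.cos e := Real.cos_pos_of_mem_Ioo ⟨by linarith, he2⟩
          have h1 : e * Real.cos e ≤ Real.sin e := by
            have := Real.le_tan he he2
            rwa [Real.tan_eq_sin_div_cos, le_div_iff₀ hce] at this
          nlinarith [Real.cos_le_one e]
      nlinarith
  rcases lt_trichotomy x 0 with h | h | h
  · rw [← Real.sinc_neg]
    exact key _ (by linarith)
  · rw [h, Real.sinc_zero]
    linarith
  · exact key _ h

/-- If `a < 4.319 < 11π/8`, then `2a - 2π < 3π/4`, so `2m² - 1 = cos (2a) ≥ -√2/2`; but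
`m² (1 + a²) = 1` and `a > 3` give `2m² - 1 < -4/5`. -/
lemma root_bound (a m : ℝ) (ha : a ∈ Set.Ioo Real.pi (3 * Real.pi / 2))
    (hc : Real.cos a = -m) (hs : Real.sin a = -(a * m)) : 4.319 ≤ a := by
  obtain ⟨ha1, ha2⟩ := ha
  have hpi := Real.pi_gt_d4
  by_contra! hlt
  have h1 : Real.cos (3 * Real.pi / 4) ≤ Real.cos (2 * a - 2 * Real.pi) := by
    apply Real.cos_le_cos_of_nonneg_of_le_pi <;> linarith
  have h2 : Real.cos (3 * Real.pi / 4) = -(√2 / 2) := by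
    rw [show 3 * Real.pi / 4 = Real.pi - Real.pi / 4 by ring, Real.cos_pi_sub, Real.cos_pi_div_four]
  rw [Real.cos_sub_two_pi, Real.cos_two_mul, hc, h2] at h1
  have h3 : √2 < 1.42 := by
    rw [Real.sqrt_lt' (by norm_num)]
    norm_num
  have h4 := Real.sin_sq_add_cos_sq a
  rw [hs, hc] at h4
  have h5 : 9 < a ^ 2 := by nlinarith
  nlinarith [sq_nonneg m]

/-- The inequality equivalent to `sinc t + sinc (t + a) ≤ 1 - m`. On each range of `t` a constant
`k` with `k (1 - cos t) ≤ 1 - sinc t` and `m a ≤ k (a + (1 - m) t)` is used: `k = 1/3` for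
`t ≥ -1.7`, `k = 0.3535` on `[-2, -1.7)`, and `k = 0.375` on `[-a/2, -2)`. -/
lemma upper_core (a m t : ℝ) (ha : 4.319 ≤ a) (ha2 : a ≤ 4.72) (hm : 0 < m) (hm2 : m ≤ 0.2256)
    (ht : t ≠ 0) (hta : -(a / 2) ≤ t) :
    m * a * (1 - Real.cos t) ≤ (1 - Real.sinc t) * (a + (1 - m) * t) := by
  have aux : ∀ k S C b : ℝ, 0 ≤ C → k * C ≤ S → 0 ≤ b → m * a ≤ k * b → m * a * C ≤ S * b := by
    intro k S C b hC h1 hb h2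
    nlinarith [mul_le_mul_of_nonneg_right h2 hC, mul_le_mul_of_nonneg_right h1 hb]
  have hC : 0 ≤ 1 - Real.cos t := by linarith [Real.cos_le_one t]
  rcases lt_or_gt_of_ne ht with h | h
  · obtain ⟨s, rfl⟩ : ∃ s, t = -s := ⟨-t, by ring⟩
    rw [Real.cos_neg] at *
    rw [Real.sinc_neg]
    have hs : 0 < s := by linarith
    have hsa : s ≤ a / 2 := by linarith
    have hb : 0 ≤ a + (1 - m) * -s := by nlinarith
    by_cases h1 : s ≤ 1.7
    · exact aux (1 / 3) _ _ _ hC (cusa s hs) hb (by nlinarith)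
    push Not at h1
    by_cases h2 : s ≤ 2
    · refine aux 0.3535 _ _ _ hC (ratio_bound _ _ (by norm_num) hs ?_) hb ?_
      · have : 2.89 ≤ s ^ 2 := by nlinarith
        have : s ^ 2 ≤ 4 := by nlinarith
        nlinarith
      · nlinarith
    push Not at h2
    · refine aux 0.375 _ _ _ hC (ratio_bound _ _ (by norm_num) hs ?_) hb ?_
      · have : 4 ≤ s ^ 2 := by nlinarith
        have : s ^ 2 ≤ 6 := by nlinarith
        nlinarith
      · have : (1 - m) * s ≤ (1 - m) * (a / 2) := by
          apply mul_le_mul_of_nonneg_left hsa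
          linarith
        nlinarith
  · exact aux (1 / 3) _ _ _ hC (cusa t h) (by nlinarith) (by nlinarith)

lemma G11_eq_sinc (u₀ u : ℝ) : G11 u₀ u = Real.sinc (u - u₀) + Real.sinc (u + u₀) := by
  unfold G11 Real.sinc
  simp only [sub_eq_zero, add_eq_zero_iff_eq_neg]

/-- Let `u₀` be the unique solution of `tan (2u₀) = 2u₀` with
`2u₀ ∈ (π, 3π/2)` (the first positive root of `tan (2u) - 2u`). Then `G11 u₀` is even and
`|G11 u₀ u| ≤ G11 u₀ u₀` for every `u`, i.e. `|G|` attains its global maximum at `±u₀`. -/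
theorem stmt11 (u₀ : ℝ)
    (hroot : Real.tan (2 * u₀) = 2 * u₀)
    (hrange : 2 * u₀ ∈ Set.Ioo Real.pi (3 * Real.pi / 2)) :
    (∀ u : ℝ, G11 u₀ (-u) = G11 u₀ u) ∧ (∀ u : ℝ, |G11 u₀ u| ≤ G11 u₀ u₀) := by
  have heven : ∀ u : ℝ, G11 u₀ (-u) = G11 u₀ u := by
    intro u
    rw [G11_eq_sinc, G11_eq_sinc, ← Real.sinc_neg (-u - u₀), ← Real.sinc_neg (-u + u₀), add_comm]
    congr 2 <;> ring
  refine ⟨heven, ?_⟩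
  obtain ⟨a, ha⟩ : ∃ a, a = 2 * u₀ := ⟨_, rfl⟩
  rw [← ha] at hroot hrange
  obtain ⟨m, hm⟩ : ∃ m, m = -Real.cos a := ⟨_, rfl⟩
  have hpi := Real.pi_gt_d4
  have hpi2 := Real.pi_lt_d4
  have hcneg : Real.cos a < 0 :=
    Real.cos_neg_of_pi_div_two_lt_of_lt (by linarith [hrange.1]) (by linarith [hrange.2])
  have hc : Real.cos a = -m := by linarith
  have hs : Real.sin a = -(a * m) := by
    rw [Real.tan_eq_sin_div_cos, div_eq_iff hcneg.ne, hc] at hroot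
    linarith
  have hm0 : 0 < m := by linarith
  have ha1 := root_bound a m hrange hc hs
  have ha2 : a ≤ 4.72 := by linarith [hrange.2]
  have hm2 : m ≤ 0.2256 := by
    have h4 := Real.sin_sq_add_cos_sq a
    rw [hs, hc] at h4
    by_contra! hlt
    have h5 : 0.2256 ^ 2 < m ^ 2 := by nlinarith
    have h6 : 4.319 ^ 2 ≤ a ^ 2 := by nlinarith
    nlinarith
  have hmax : G11 u₀ u₀ = 1 - m := by
    rw [G11_eq_sinc, sub_self, Real.sinc_zero, ← two_mul, ← ha,
      Real.sinc_of_ne_zero (by linarith), hs]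
    field_simp
    ring
  have hpos : ∀ u : ℝ, 0 ≤ u → |G11 u₀ u| ≤ G11 u₀ u₀ := by
    intro u hu
    rw [hmax, G11_eq_sinc]
    have hl := neg_le_sinc a m hrange hm0 hc hs
    refine abs_le.2 ⟨by linarith [hl (u - u₀), hl (u + u₀)], ?_⟩
    obtain ⟨t, ht⟩ : ∃ t, t = u - u₀ := ⟨_, rfl⟩
    rw [← ht, show u + u₀ = t + a by linarith]
    by_cases ht0 : t = 0
    · rw [ht0, Real.sinc_zero, zero_add, Real.sinc_of_ne_zero (by linarith), hs]
      field_simp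
      linarith
    have hcore := upper_core a m t ha1 ha2 hm0 hm2 ht0 (by linarith)
    have hta : 0 < t + a := by linarith
    have hst : Real.sin t = t * Real.sinc t := by
      rw [Real.sinc_of_ne_zero ht0]
      field_simp
    have : Real.sinc (t + a) ≤ 1 - m - Real.sinc t := by
      rw [Real.sinc_of_ne_zero hta.ne', div_le_iff₀ hta, Real.sin_add, hs, hc, hst]
      nlinarith
    linarith
  intro u
  rcases le_total 0 u with h | h
  · exact hpos u h
  · rw [← heven]
    exact hpos _ (by linarith)
end

section
/- Let d₀ ∈ ℝ, ξ₀ > d₀, let u₀ be the first positive root of tan(2u) − 2u (so 2u₀ ∈ (π, 3π/2)), and set c = u₀/√(ξ₀−d₀). Then the function F_c satisfies |F_c(ξ)| ≤ F_c(ξ₀) for every ξ ≥ d₀. -/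
/-!
Put `r = √(ξ₀ - d₀)`, `w = 2u₀`, `k = -cos w`. After the substitution `y = c √(ξ - d₀) - u₀ ≥ -w/2`,
one has `F_c(ξ) = c (sinc y + sinc (y + w))`, so the claim is
`|sinc y + sinc (y + w)| ≤ 1 + sinc w` for `y ≥ -w/2`.

The equation `tan w = w` gives `cos w = -k` and `sin w = -wk`. Expanding `sin (y + w)` with these
values, the upper bound becomes
`k w (1 - cos y) ≤ (1 - sinc y) (w + (1 - k) y)`.
The Cusa–Huygens inequality `1 - cos y ≤ 3 (1 - sinc y)` proves this as long as `y ≥ -1.8`. For the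
remaining `y ∈ [-w/2, -1.8]` the constant `3` is slightly too large, and the sharper
`1 - cos y ≤ (11/4) (1 - sinc y)`, valid on that range, is used. The numerical input is
`w ≥ 4.48` and hence `k = 1/√(1 + w²) ≤ 0.22`. The lower bound only needs `sinc ≥ -1/3`.
-/

/-- The function
`F_c(ξ) = sin(c(√(ξ-d₀) - √(ξ₀-d₀)))/(√(ξ-d₀) - √(ξ₀-d₀))
          + sin(c(√(ξ-d₀) + √(ξ₀-d₀)))/(√(ξ-d₀) + √(ξ₀-d₀))`,
with the first term extended continuously by the value `c` at `ξ = ξ₀`. -/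
noncomputable def Fc (d₀ ξ₀ c ξ : ℝ) : ℝ :=
  (if ξ = ξ₀ then c
    else Real.sin (c * (Real.sqrt (ξ - d₀) - Real.sqrt (ξ₀ - d₀)))
      / (Real.sqrt (ξ - d₀) - Real.sqrt (ξ₀ - d₀)))
  + Real.sin (c * (Real.sqrt (ξ - d₀) + Real.sqrt (ξ₀ - d₀)))
      / (Real.sqrt (ξ - d₀) + Real.sqrt (ξ₀ - d₀))

lemma three_sin_le {y : ℝ} (hy : 0 ≤ y) : 3 * Real.sin y ≤ y * (2 + Real.cos y) := by
  rcases le_or_gt 3 y with h | h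
  · nlinarith [Real.sin_le_one y, Real.neg_one_le_cos y]
  have hmono : MonotoneOn (fun t : ℝ => t * (2 + Real.cos t) - 3 * Real.sin t)
      (Set.Icc 0 3) := by
    have hderiv : ∀ t : ℝ, HasDerivAt (fun t : ℝ => t * (2 + Real.cos t) - 3 * Real.sin t)
        (1 * (2 + Real.cos t) + t * (-Real.sin t) - 3 * Real.cos t) t := fun t =>
      ((hasDerivAt_id t).mul ((Real.hasDerivAt_cos t).const_add 2)).sub
        ((Real.hasDerivAt_sin t).const_mul 3)
    refine monotoneOn_of_deriv_nonneg (convex_Icc 0 3) ?_ ?_ ?_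
    · exact fun t _ => (hderiv t).continuousAt.continuousWithinAt
    · exact fun t _ => (hderiv t).differentiableAt.differentiableWithinAt
    · intro t ht
      rw [interior_Icc] at ht
      rw [(hderiv t).deriv]
      -- With `t = 2v` the derivative is `4 sin v (sin v - v cos v)`, and `v < tan v`.
      obtain ⟨v, rfl⟩ : ∃ v, t = 2 * v := ⟨t / 2, by ring⟩
      have hv0 : 0 < v := by linarith [ht.1]
      have hv1 : v < Real.pi / 2 := by linarith [ht.2, Real.pi_gt_three]
      have hs : 0 < Real.sin v := Real.sin_pos_of_pos_of_lt_pi hv0 (by linarith)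
      have hc : 0 < Real.cos v := Real.cos_pos_of_mem_Ioo ⟨by linarith, hv1⟩
      have htan := Real.lt_tan hv0 hv1
      rw [Real.tan_eq_sin_div_cos, lt_div_iff₀ hc] at htan
      rw [Real.sin_two_mul, Real.cos_two_mul]
      nlinarith [mul_pos hs (sub_pos.2 htan), Real.sin_sq_add_cos_sq v]
  have := hmono (Set.left_mem_Icc.2 (by norm_num)) ⟨hy, h.le⟩ hy
  simp at this
  linarith

/-- The Cusa–Huygens inequality `sinc y ≤ (2 + cos y) / 3`. -/
lemma one_sub_cos_le (y : ℝ) : 1 - Real.cos y ≤ 3 * (1 - Real.sinc y) := by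
  wlog hy : 0 ≤ y generalizing y
  · simpa using this (-y) (by linarith)
  rcases hy.eq_or_lt with rfl | hy
  · simp
  have h := three_sin_le hy.le
  have hs : Real.sinc y ≤ (2 + Real.cos y) / 3 := by
    rw [Real.sinc_of_ne_zero hy.ne', div_le_iff₀ hy]
    linarith
  linarith

lemma one_sub_cos_le_of_mem {y : ℝ} (h1 : 1.8 ≤ y) (h2 : y ≤ 2.4) :
    1 - Real.cos y ≤ 11 / 4 * (1 - Real.sinc y) := by
  have hy : 0 < y := by linarith
  -- Taylor bounds at `π / 2` give `11 sin y ≤ y (7 + 4 cos y)`.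
  obtain ⟨θ, rfl⟩ : ∃ θ, y = θ + Real.pi / 2 := ⟨y - Real.pi / 2, by ring⟩
  have hp := Real.pi_gt_d2
  have hp' := Real.pi_lt_d2
  have hθ0 : 0.225 ≤ θ := by linarith
  have hθ1 : θ ≤ 0.83 := by linarith
  have hsin : Real.sin θ ≤ θ := Real.sin_le (by linarith)
  have hcos : Real.cos θ ≤ 1 - θ ^ 2 / 2 + θ ^ 4 * (5 / 96) := by
    have := (abs_le.1 (Real.cos_bound (x := θ) (by rw [abs_le]; constructor <;> linarith))).2
    rw [abs_of_nonneg (by linarith)] at this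
    linarith
  have key : 11 * Real.cos θ ≤ (θ + Real.pi / 2) * (7 - 4 * Real.sin θ) := by
    have h3 : (θ + 1.57) * (7 - 4 * θ) ≤ (θ + Real.pi / 2) * (7 - 4 * Real.sin θ) :=
      mul_le_mul (by linarith) (by linarith) (by linarith) (by linarith)
    nlinarith [mul_nonneg (sub_nonneg.2 hθ0) (sub_nonneg.2 hθ1), pow_le_pow_left₀ (by linarith) hθ1 2,
      mul_le_mul_of_nonneg_left (pow_le_pow_left₀ (by linarith) hθ1 2) (sq_nonneg θ)]
  have hs : Real.sinc (θ + Real.pi / 2) ≤ (7 - 4 * Real.sin θ) / 11 := by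
    rw [Real.sinc_of_ne_zero hy.ne', div_le_iff₀ hy, Real.sin_add_pi_div_two]
    linarith
  rw [Real.cos_add_pi_div_two]
  linarith

lemma neg_third_le_sinc (y : ℝ) : -(1 / 3) ≤ Real.sinc y := by
  wlog hy : 0 ≤ y generalizing y
  · simpa using this (-y) (by linarith)
  rcases hy.eq_or_lt with rfl | hy
  · norm_num
  rw [Real.sinc_of_ne_zero hy.ne', le_div_iff₀ hy]
  rcases le_or_gt y Real.pi with h | h
  · linarith [Real.sin_nonneg_of_nonneg_of_le_pi hy.le h]
  · linarith [Real.neg_one_le_sin y, Real.pi_gt_three]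

/-- The numerical bound `w ≥ 4.48` for the first positive root of `tan w = w`. -/
lemma root_lower_bound {w : ℝ} (hroot : Real.tan w = w)
    (h1 : Real.pi < w) (h2 : w < 3 * Real.pi / 2) : 4.48 ≤ w := by
  have hp := Real.pi_gt_d4
  -- For `θ = 3π/2 - w` we have `θ < tan θ = 1 / w`; applying this twice sharpens `w > π`.
  have h3 : Real.tan (3 * Real.pi / 2 - w) = w⁻¹ := by
    rw [show 3 * Real.pi / 2 - w = Real.pi / 2 - (w - Real.pi) by ring, Real.tan_pi_div_two_sub,
      Real.tan_sub_pi, hroot]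
  have h4 := Real.lt_tan (x := 3 * Real.pi / 2 - w) (by linarith) (by linarith)
  rw [h3] at h4
  have h5 : w⁻¹ ≤ 3.14⁻¹ := inv_anti₀ (by norm_num) (by linarith)
  have h6 : (4.39 : ℝ) ≤ w := by norm_num at h5; linarith
  have h7 : w⁻¹ ≤ 4.39⁻¹ := inv_anti₀ (by norm_num) h6
  norm_num at h7
  linarith

/-- The scaled inequality: `F_c(ξ) = c (sinc y + sinc (y + w))` with `w = 2u₀`. -/
lemma sinc_add_sinc_bound {w y : ℝ} (hroot : Real.tan w = w)
    (h1 : Real.pi < w) (h2 : w < 3 * Real.pi / 2) (hy : -(w / 2) ≤ y) :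
    |Real.sinc y + Real.sinc (y + w)| ≤ 1 + Real.sinc w := by
  have hw := root_lower_bound hroot h1 h2
  have hw0 : 0 < w := by linarith
  have hyw : 0 < y + w := by linarith
  have hcneg : Real.cos w < 0 :=
    Real.cos_neg_of_pi_div_two_lt_of_lt (by linarith [Real.pi_pos]) (by linarith)
  have hsin : Real.sin w = w * Real.cos w := by
    rw [Real.tan_eq_sin_div_cos, div_eq_iff hcneg.ne] at hroot
    exact hroot
  have hsw : Real.sinc w = Real.cos w := by
    rw [Real.sinc_of_ne_zero hw0.ne', hsin]
    field_simp
  obtain ⟨k, hk⟩ : ∃ k, Real.cos w = -k := ⟨-Real.cos w, by ring⟩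
  have hk0 : 0 < k := by linarith
  have hksq : k ^ 2 * (1 + w ^ 2) = 1 := by
    have := Real.sin_sq_add_cos_sq w
    rw [hsin, hk] at this
    linarith
  have hk1 : k ≤ 0.22 := by
    by_contra! h
    nlinarith [mul_le_mul (pow_le_pow_left₀ (by norm_num) h.le 2)
      (pow_le_pow_left₀ (by norm_num) hw 2) (by norm_num) (sq_nonneg k)]
  rw [hsw, hk, abs_le]
  constructor
  · linarith [neg_third_le_sinc y, neg_third_le_sinc (y + w)]
  have hsy : Real.sin y = y * Real.sinc y := by
    rcases eq_or_ne y 0 with rfl | h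
    · simp
    · rw [Real.sinc_of_ne_zero h]; field_simp
  have hA : 0 ≤ 1 - Real.sinc y := by linarith [Real.sinc_le_one y]
  have key : k * w * (1 - Real.cos y) ≤ (1 - Real.sinc y) * (w + (1 - k) * y) := by
    have hkw : 0 ≤ k * w := by positivity
    rcases le_or_gt (-1.8) y with h | h
    · have hb : 3 * (k * w) ≤ w + (1 - k) * y := by nlinarith
      nlinarith [mul_le_mul_of_nonneg_left (one_sub_cos_le y) hkw,
        mul_le_mul_of_nonneg_left hb hA]
    · have h3 := one_sub_cos_le_of_mem (y := -y) (by linarith)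
        (by linarith [Real.pi_lt_d2])
      rw [Real.cos_neg, Real.sinc_neg] at h3
      have hb : 11 / 4 * (k * w) ≤ w + (1 - k) * y := by nlinarith
      nlinarith [mul_le_mul_of_nonneg_left h3 hkw, mul_le_mul_of_nonneg_left hb hA]
  have hle : Real.sinc (y + w) ≤ 1 + -k - Real.sinc y := by
    rw [Real.sinc_of_ne_zero hyw.ne', div_le_iff₀ hyw, Real.sin_add, hsin, hk, hsy]
    nlinarith
  linarith

/-- Let `d₀ ∈ ℝ`, `ξ₀ > d₀`, let `u₀` be the first positive root of
`tan (2u) - 2u` (so `2u₀ ∈ (π, 3π/2)`), and set `c = u₀ / √(ξ₀ - d₀)`. Then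
`|F_c ξ| ≤ F_c ξ₀` for every `ξ ≥ d₀`. -/
theorem stmt12 (d₀ ξ₀ : ℝ) (hd : d₀ < ξ₀)
    (u₀ : ℝ)
    (hroot : Real.tan (2 * u₀) = 2 * u₀)
    (hrange : 2 * u₀ ∈ Set.Ioo Real.pi (3 * Real.pi / 2))
    (c : ℝ) (hc : c = u₀ / Real.sqrt (ξ₀ - d₀)) :
    ∀ ξ : ℝ, d₀ ≤ ξ → |Fc d₀ ξ₀ c ξ| ≤ Fc d₀ ξ₀ c ξ₀ := by
  have hr : 0 < Real.sqrt (ξ₀ - d₀) := Real.sqrt_pos.2 (by linarith)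
  have hu : 0 < u₀ := by linarith [hrange.1, Real.pi_pos]
  have hc0 : 0 < c := by rw [hc]; positivity
  have hcr : c * Real.sqrt (ξ₀ - d₀) = u₀ := by rw [hc]; field_simp
  have hsinc : ∀ t : ℝ, t ≠ 0 → Real.sin (c * t) / t = c * Real.sinc (c * t) := by
    intro t ht
    rw [Real.sinc_of_ne_zero (by positivity)]
    field_simp
  have hF : ∀ ξ : ℝ, d₀ ≤ ξ → Fc d₀ ξ₀ c ξ =
      c * (Real.sinc (c * Real.sqrt (ξ - d₀) - u₀)
        + Real.sinc (c * Real.sqrt (ξ - d₀) - u₀ + 2 * u₀)) := by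
    intro ξ hξ
    have hx := Real.sqrt_nonneg (ξ - d₀)
    have e1 : c * (Real.sqrt (ξ - d₀) - Real.sqrt (ξ₀ - d₀)) = c * Real.sqrt (ξ - d₀) - u₀ := by
      rw [mul_sub, hcr]
    have e2 : c * (Real.sqrt (ξ - d₀) + Real.sqrt (ξ₀ - d₀))
        = c * Real.sqrt (ξ - d₀) - u₀ + 2 * u₀ := by
      rw [mul_add, hcr]; ring
    rw [Fc, hsinc (Real.sqrt (ξ - d₀) + Real.sqrt (ξ₀ - d₀)) (by linarith), e2, mul_add]
    congr 1
    split_ifs with h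
    · rw [h, hcr]; simp
    · rw [hsinc (Real.sqrt (ξ - d₀) - Real.sqrt (ξ₀ - d₀)), e1]
      intro h0
      have := (Real.sqrt_inj (by linarith) (by linarith)).1 (sub_eq_zero.1 h0)
      exact h (by linarith)
  intro ξ hξ
  rw [hF ξ hξ, hF ξ₀ hd.le, hcr, abs_mul, abs_of_pos hc0]
  simp only [sub_self, zero_add, Real.sinc_zero]
  refine mul_le_mul_of_nonneg_left (sinc_add_sinc_bound hroot hrange.1 hrange.2 ?_) hc0.le
  have : 0 ≤ c * Real.sqrt (ξ - d₀) := by positivity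
  linarith
end

section
/- Let d₀ ∈ ℝ, ξ₀ > d₀, let u₀ be the first positive root of tan(2u) − 2u (so 2u₀ ∈ (π, 3π/2)), and set c = u₀/√(ξ₀−d₀). Then for every δ > 0 there exists ε > 0 such that |F_c(ξ)| ≤ F_c(ξ₀) − ε for every ξ ∈ [d₀,∞) with |ξ − ξ₀| ≥ δ. -/
/-! ### Taylor bounds for sine and cosine on `[0, ∞)` -/

/-- A function vanishing at `0` with nonnegative derivative on `[0, ∞)` is nonnegative there. -/
lemma nonneg_of_deriv {f f' : ℝ → ℝ} (h0 : f 0 = 0) (hf : ∀ x, HasDerivAt f (f' x) x)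
    (hf' : ∀ x, 0 ≤ x → 0 ≤ f' x) {x : ℝ} (hx : 0 ≤ x) : 0 ≤ f x := by
  have hm : MonotoneOn f (Set.Ici 0) := by
    refine monotoneOn_of_deriv_nonneg (convex_Ici 0)
      (fun x _ => (hf x).continuousAt.continuousWithinAt)
      (fun x _ => (hf x).differentiableAt.differentiableWithinAt) ?_
    intro x hx
    rw [interior_Ici] at hx
    rw [(hf x).deriv]
    exact hf' x (le_of_lt hx)
  have := hm (Set.mem_Ici.2 le_rfl) (Set.mem_Ici.2 hx) hx
  rwa [h0] at this

lemma sin_ge_taylor {x : ℝ} (hx : 0 ≤ x) : x - x ^ 3 / 6 ≤ Real.sin x := by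
  have := nonneg_of_deriv (f := fun x => Real.sin x - (x - x ^ 3 / 6))
    (f' := fun x => Real.cos x - (1 - x ^ 2 / 2)) (by simp)
    (fun x => by
      refine HasDerivAt.congr_deriv ((Real.hasDerivAt_sin x).sub
        ((hasDerivAt_id' x).sub ((hasDerivAt_pow 3 x).div_const 6))) ?_
      push_cast; ring)
    (fun x _ => by have := Real.one_sub_sq_div_two_le_cos (x := x); linarith) hx
  linarith

lemma cos_le_taylor {x : ℝ} (hx : 0 ≤ x) : Real.cos x ≤ 1 - x ^ 2 / 2 + x ^ 4 / 24 := by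
  have := nonneg_of_deriv (f := fun x => (1 - x ^ 2 / 2 + x ^ 4 / 24) - Real.cos x)
    (f' := fun x => Real.sin x - (x - x ^ 3 / 6)) (by simp)
    (fun x => by
      refine HasDerivAt.congr_deriv (((((hasDerivAt_pow 2 x).div_const 2).const_sub 1).add
        ((hasDerivAt_pow 4 x).div_const 24)).sub (Real.hasDerivAt_cos x)) ?_
      push_cast; ring)
    (fun x hx => by have := sin_ge_taylor hx; linarith) hx
  linarith

lemma sin_le_taylor {x : ℝ} (hx : 0 ≤ x) : Real.sin x ≤ x - x ^ 3 / 6 + x ^ 5 / 120 := by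
  have := nonneg_of_deriv (f := fun x => (x - x ^ 3 / 6 + x ^ 5 / 120) - Real.sin x)
    (f' := fun x => (1 - x ^ 2 / 2 + x ^ 4 / 24) - Real.cos x) (by simp)
    (fun x => by
      refine HasDerivAt.congr_deriv ((((hasDerivAt_id' x).sub ((hasDerivAt_pow 3 x).div_const 6)).add
        ((hasDerivAt_pow 5 x).div_const 120)).sub (Real.hasDerivAt_sin x)) ?_
      push_cast; ring)
    (fun x hx => by have := cos_le_taylor hx; linarith) hx
  linarith

lemma cos_ge_taylor {x : ℝ} (hx : 0 ≤ x) :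
    1 - x ^ 2 / 2 + x ^ 4 / 24 - x ^ 6 / 720 ≤ Real.cos x := by
  have := nonneg_of_deriv
    (f := fun x => Real.cos x - (1 - x ^ 2 / 2 + x ^ 4 / 24 - x ^ 6 / 720))
    (f' := fun x => (x - x ^ 3 / 6 + x ^ 5 / 120) - Real.sin x) (by simp)
    (fun x => by
      refine HasDerivAt.congr_deriv ((Real.hasDerivAt_cos x).sub (((((hasDerivAt_pow 2 x).div_const 2).const_sub 1).add
        ((hasDerivAt_pow 4 x).div_const 24)).sub ((hasDerivAt_pow 6 x).div_const 720))) ?_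
      push_cast; ring)
    (fun x hx => by have := sin_le_taylor hx; linarith) hx
  linarith

/-! ### The root of `tan w = w` -/

/-- Numerical location of the root `w = 4.4934…` of `tan w = w`, and of `cos w = -0.2172…`. -/
lemma root_bounds {w : ℝ} (hw : Real.tan w = w) (h : w ∈ Set.Ioo Real.pi (3 * Real.pi / 2)) :
    Real.sin w = w * Real.cos w ∧ 4.48 ≤ w ∧ w ≤ 4.72 ∧ Real.cos w ≤ -(1 / 5) ∧
      -(1 / 4) ≤ Real.cos w := by
  obtain ⟨h1, h2⟩ := h
  have p1 := Real.pi_gt_d4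
  have p2 := Real.pi_lt_d4
  -- `θ = 3π/2 - w` satisfies `tan θ = 1/w`, so `θ < tan θ` bounds `w` from below
  have hθ0 : 0 < 3 * Real.pi / 2 - w := by linarith
  have hθ1 : 3 * Real.pi / 2 - w < Real.pi / 2 := by linarith
  have e : 3 * Real.pi / 2 - w = Real.pi - (w - Real.pi / 2) := by ring
  have hsinθ : Real.sin (3 * Real.pi / 2 - w) = -Real.cos w := by
    rw [e, Real.sin_pi_sub, Real.sin_sub_pi_div_two]
  have hcosθ : Real.cos (3 * Real.pi / 2 - w) = -Real.sin w := by
    rw [e, Real.cos_pi_sub, Real.cos_sub_pi_div_two]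
  have hpos : 0 < Real.sin (3 * Real.pi / 2 - w) :=
    Real.sin_pos_of_pos_of_lt_pi hθ0 (by linarith)
  have hcpos : 0 < Real.cos (3 * Real.pi / 2 - w) :=
    Real.cos_pos_of_mem_Ioo ⟨by linarith, hθ1⟩
  have hcneg : Real.cos w < 0 := by linarith
  have hsin : Real.sin w = w * Real.cos w := by
    rw [Real.tan_eq_sin_div_cos, div_eq_iff hcneg.ne] at hw
    exact hw
  have ht := Real.lt_tan hθ0 hθ1
  rw [Real.tan_eq_sin_div_cos, lt_div_iff₀ hcpos, hcosθ, hsinθ, hsin] at ht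
  have hq : (3 * Real.pi / 2 - w) * w < 1 := by
    have : ((3 * Real.pi / 2 - w) * w) * (-Real.cos w) < 1 * (-Real.cos w) := by linarith
    exact lt_of_mul_lt_mul_right this (by linarith)
  have hw1 : 4.48 ≤ w := by
    by_contra! hlt
    nlinarith [mul_pos (sub_pos.2 h1) (sub_pos.2 hlt)]
  have hw2 : w ≤ 4.72 := by linarith
  have hsq := Real.sin_sq_add_cos_sq w
  rw [hsin] at hsq
  have hww : 20 ≤ w ^ 2 := by nlinarith
  have hww' : w ^ 2 ≤ 23 := by
    have : w ≤ 4.7125 := by linarith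
    nlinarith
  refine ⟨hsin, hw1, hw2, ?_, ?_⟩
  · nlinarith [mul_nonneg (sub_nonneg.2 hww') (sq_nonneg (Real.cos w))]
  · nlinarith [mul_nonneg (sub_nonneg.2 hww) (sq_nonneg (Real.cos w))]

/-! ### The bound on `sinc y + sinc (y + w)` -/

lemma sinc_le_inv {x : ℝ} (hx : 0 < x) : |Real.sinc x| ≤ 1 / x := by
  rw [Real.sinc_of_ne_zero hx.ne', abs_div, abs_of_pos hx]
  gcongr
  exact Real.abs_sin_le_one x

lemma sinc_sum_lt_right {w : ℝ} (hs : Real.sin w = w * Real.cos w) (hw1 : 4.48 ≤ w)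
    (hC2 : -(1 / 4) ≤ Real.cos w)
    {y : ℝ} (hy : 0 < y) : Real.sinc y + Real.sinc (y + w) < 1 + Real.cos w := by
  rw [Real.sinc_of_ne_zero hy.ne', Real.sinc_of_ne_zero (by linarith), Real.sin_add, hs,
    div_add_div _ _ hy.ne' (by linarith), div_lt_iff₀ (by nlinarith)]
  have hS : w * -Real.cos w ≤ 1 := by have := Real.neg_one_le_sin w; linarith
  have hsy := Real.sin_lt hy
  have hc1 := Real.cos_le_one y
  have key : y * (1 - Real.cos y) ≤ (y - Real.sin y) * w := by
    rcases le_total y 2 with h | h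
    · have t1 := sin_le_taylor hy.le
      have t2 := Real.one_sub_sq_div_two_le_cos (x := y)
      have a1 : y * (1 - Real.cos y) ≤ y * (y ^ 2 / 2) := by gcongr; linarith
      have a2 : (y - Real.sin y) * 4.48 ≤ (y - Real.sin y) * w := by gcongr
      have a3 : y ^ 3 * y ^ 2 ≤ y ^ 3 * 4 := by gcongr; nlinarith
      have : 0 < y ^ 3 := by positivity
      nlinarith
    · have a2 : (y - Real.sin y) * 4.48 ≤ (y - Real.sin y) * w := by gcongr
      have := Real.sin_le_one y
      have a1 : y * (1 - Real.cos y) ≤ y * 2 := by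
        gcongr; have := Real.neg_one_le_cos y; linarith
      linarith
  have k2 : (w * -Real.cos w) * (y * (1 - Real.cos y)) ≤ 1 * (y * (1 - Real.cos y)) :=
    mul_le_mul_of_nonneg_right hS (mul_nonneg hy.le (by linarith))
  have k3 : 0 < (y - Real.sin y) * (y * (1 + Real.cos w)) :=
    mul_pos (by linarith) (mul_pos hy (by linarith))
  nlinarith

/-- The tight case `y = -z < 0`: at `z = w / 2` the two sides are about `0.694` and `0.783`. -/
lemma sinc_sum_lt_left {w : ℝ} (hs : Real.sin w = w * Real.cos w) (hw1 : 4.48 ≤ w)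
    (hw2 : w ≤ 4.72) (hC1 : Real.cos w ≤ -(1 / 5))
    {z : ℝ} (hz : 0 < z) (hzw : 2 * z ≤ w) :
    Real.sinc z + Real.sinc (w - z) < 1 + Real.cos w := by
  rw [Real.sinc_of_ne_zero hz.ne', Real.sinc_of_ne_zero (by linarith), Real.sin_sub, hs,
    div_add_div _ _ hz.ne' (by linarith), div_lt_iff₀ (by nlinarith)]
  have hS : w * -Real.cos w ≤ 1 := by have := Real.neg_one_le_sin w; linarith
  have t1 := sin_le_taylor hz.le
  have t2 := cos_ge_taylor hz.le
  have hc1 := Real.cos_le_one z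
  have poly : 1 / 2 - z ^ 2 / 24 + z ^ 4 / 720 < (1 / 6 - z ^ 2 / 120) * (w - 4 / 5 * z) := by
    have hq : 0 < 1 / 6 - z ^ 2 / 120 := by nlinarith
    -- the right side increases with `w`, so `w` may be replaced by its lower bound
    -- `max 4.48 (2 * z)`
    rcases le_total z 2.24 with h | h
    · have : (1 / 6 - z ^ 2 / 120) * (4.48 - 4 / 5 * z)
        ≤ (1 / 6 - z ^ 2 / 120) * (w - 4 / 5 * z) := by gcongr
      refine lt_of_lt_of_le ?_ this
      have hd : 0 ≤ 2.24 - z := by linarith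
      nlinarith [mul_nonneg hz.le hd, mul_nonneg (mul_nonneg hz.le hz.le) hd,
        mul_nonneg (mul_nonneg hz.le hd) hd, mul_nonneg (mul_nonneg (mul_nonneg hz.le hz.le) hz.le) hd]
    · have : (1 / 6 - z ^ 2 / 120) * (2 * z - 4 / 5 * z)
        ≤ (1 / 6 - z ^ 2 / 120) * (w - 4 / 5 * z) := by gcongr
      refine lt_of_lt_of_le ?_ this
      have hd : 0 ≤ z - 2.24 := by linarith
      have he : 0 ≤ 2.36 - z := by linarith
      nlinarith [mul_nonneg hd he, mul_nonneg (mul_nonneg hd he) hz.le,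
        mul_nonneg (mul_nonneg (mul_nonneg hd he) hz.le) hz.le]
  have b1 : z * (1 - Real.cos z) ≤ z ^ 3 * (1 / 2 - z ^ 2 / 24 + z ^ 4 / 720) := by
    have : z * (1 - Real.cos z) ≤ z * (z ^ 2 / 2 - z ^ 4 / 24 + z ^ 6 / 720) := by
      gcongr; linarith
    linarith
  have b2 : z ^ 3 * ((1 / 6 - z ^ 2 / 120) * (w - 4 / 5 * z))
      ≤ (z - Real.sin z) * (w - 4 / 5 * z) := by
    rw [← mul_assoc]
    gcongr
    · linarith
    · linarith
  have b3 := mul_lt_mul_of_pos_left poly (pow_pos hz 3)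
  have b4 : (z - Real.sin z) * (w - 4 / 5 * z) ≤ (z - Real.sin z) * (w - z - Real.cos w * z) := by
    have := Real.sin_lt hz
    have := mul_nonneg hz.le (sub_nonneg.2 hC1)
    gcongr ?_ * ?_
    linarith
  have k2 : (w * -Real.cos w) * (z * (1 - Real.cos z)) ≤ 1 * (z * (1 - Real.cos z)) :=
    mul_le_mul_of_nonneg_right hS (mul_nonneg hz.le (by linarith))
  nlinarith

/-- Off `y = 0`, `|sinc y + sinc (y + w)|` stays strictly below its value `1 + sinc w = 1 + cos w`
at `y = 0`. -/
lemma abs_sinc_sum_lt {w : ℝ} (hw : Real.tan w = w)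
    (h : w ∈ Set.Ioo Real.pi (3 * Real.pi / 2)) {y : ℝ} (hy0 : y ≠ 0) (hyw : -(w / 2) ≤ y) :
    |Real.sinc y + Real.sinc (y + w)| < 1 + Real.cos w := by
  obtain ⟨hs, hw1, hw2, hC1, hC2⟩ := root_bounds hw h
  have p1 := Real.pi_gt_d4
  rw [abs_lt]
  constructor
  · have i2 := (abs_le.1 (sinc_le_inv (x := y + w) (by linarith))).1
    have j2 : 1 / (y + w) ≤ 1 / 2 := by gcongr; linarith
    rcases le_total y Real.pi with hp | hp
    · have : 0 ≤ Real.sinc y := by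
        rcases lt_or_gt_of_ne hy0 with hy | hy
        · rw [← Real.sinc_neg, Real.sinc_of_ne_zero (by linarith)]
          exact div_nonneg (Real.sin_nonneg_of_nonneg_of_le_pi (by linarith) (by linarith))
            (by linarith)
        · rw [Real.sinc_of_ne_zero hy0]
          exact div_nonneg (Real.sin_nonneg_of_nonneg_of_le_pi hy.le hp) hy.le
      linarith
    · have i1 := (abs_le.1 (sinc_le_inv (x := y) (by linarith))).1
      have j1 : 1 / y ≤ 1 / 3 := by gcongr; linarith
      have j3 : 1 / (y + w) ≤ 1 / 7 := by gcongr; linarith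
      linarith
  · rcases lt_or_gt_of_ne hy0 with hy | hy
    · have := sinc_sum_lt_left hs hw1 hw2 hC1 (z := -y) (by linarith) (by linarith)
      rwa [Real.sinc_neg, sub_neg_eq_add, add_comm w y] at this
    · exact sinc_sum_lt_right hs hw1 hC2 hy

/-! ### Rescaling and the uniform gap -/

/-- The rescaling `y = c (√(ξ - d₀) - √(ξ₀ - d₀))`, `2u₀ = 2c √(ξ₀ - d₀)` turns `F_c` into
`c (sinc y + sinc (y + 2u₀))`; `sinc 0 = 1` absorbs the continuous extension at `ξ₀`. -/
lemma Fc_eq {d₀ ξ₀ u₀ c ξ : ℝ} (hd : d₀ < ξ₀) (hu : 0 < u₀)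
    (hc : c = u₀ / Real.sqrt (ξ₀ - d₀)) (hξ : d₀ ≤ ξ) :
    Fc d₀ ξ₀ c ξ = c * (Real.sinc (c * (Real.sqrt (ξ - d₀) - Real.sqrt (ξ₀ - d₀)))
      + Real.sinc (c * (Real.sqrt (ξ - d₀) - Real.sqrt (ξ₀ - d₀)) + 2 * u₀)) := by
  have ha : 0 < Real.sqrt (ξ₀ - d₀) := Real.sqrt_pos.2 (by linarith)
  have hs := Real.sqrt_nonneg (ξ - d₀)
  have hc0 : 0 < c := hc ▸ div_pos hu ha
  have hcu : u₀ = c * Real.sqrt (ξ₀ - d₀) := by rw [hc]; field_simp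
  have e : c * (Real.sqrt (ξ - d₀) - Real.sqrt (ξ₀ - d₀)) + 2 * u₀
      = c * (Real.sqrt (ξ - d₀) + Real.sqrt (ξ₀ - d₀)) := by rw [hcu]; ring
  have hp : 0 < Real.sqrt (ξ - d₀) + Real.sqrt (ξ₀ - d₀) := by linarith
  rw [e, Real.sinc_of_ne_zero (x := c * (Real.sqrt (ξ - d₀) + Real.sqrt (ξ₀ - d₀)))
    (mul_pos hc0 hp).ne']
  unfold Fc
  split_ifs with h
  · subst h
    simp only [sub_self, mul_zero, Real.sinc_zero]
    field_simp
  · have hne : Real.sqrt (ξ - d₀) - Real.sqrt (ξ₀ - d₀) ≠ 0 := by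
      intro h0
      apply h
      have := (Real.sqrt_inj (by linarith) (by linarith)).1 (sub_eq_zero.1 h0)
      linarith
    rw [Real.sinc_of_ne_zero (mul_ne_zero hc0.ne' hne)]
    field_simp

/-- Let `d₀ ∈ ℝ`, `ξ₀ > d₀`, let `u₀` be the first positive root of
`tan (2u) - 2u` (so `2u₀ ∈ (π, 3π/2)`), and set `c = u₀ / √(ξ₀ - d₀)`. Then for every
`δ > 0` there is `ε > 0` with `|F_c ξ| ≤ F_c ξ₀ - ε` for all `ξ ∈ [d₀,∞)` with
`|ξ - ξ₀| ≥ δ`. -/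
theorem stmt13 (d₀ ξ₀ : ℝ) (hd : d₀ < ξ₀)
    (u₀ : ℝ)
    (hroot : Real.tan (2 * u₀) = 2 * u₀)
    (hrange : 2 * u₀ ∈ Set.Ioo Real.pi (3 * Real.pi / 2))
    (c : ℝ) (hc : c = u₀ / Real.sqrt (ξ₀ - d₀)) :
    ∀ δ : ℝ, 0 < δ → ∃ ε : ℝ, 0 < ε ∧
      ∀ ξ : ℝ, d₀ ≤ ξ → δ ≤ |ξ - ξ₀| → |Fc d₀ ξ₀ c ξ| ≤ Fc d₀ ξ₀ c ξ₀ - ε := by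
  intro δ hδ
  have ha : 0 < Real.sqrt (ξ₀ - d₀) := Real.sqrt_pos.2 (by linarith)
  obtain ⟨hs, hw1, hw2, hC1, hC2⟩ := root_bounds hroot hrange
  have hu : 0 < u₀ := by linarith
  have hc0 : 0 < c := hc ▸ div_pos hu ha
  have hcu : c * Real.sqrt (ξ₀ - d₀) = u₀ := by rw [hc]; field_simp
  have hF0 : Fc d₀ ξ₀ c ξ₀ = c * (1 + Real.cos (2 * u₀)) := by
    rw [Fc_eq hd hu hc hd.le, sub_self, mul_zero, zero_add, Real.sinc_zero,
      Real.sinc_of_ne_zero (by linarith), hs, mul_div_cancel_left₀ _ (by linarith)]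
  set y : ℝ → ℝ := fun ξ => c * (Real.sqrt (ξ - d₀) - Real.sqrt (ξ₀ - d₀)) with hy
  set G : ℝ → ℝ := fun ξ => |c * (Real.sinc (y ξ) + Real.sinc (y ξ + 2 * u₀))| with hG
  have hFG : ∀ ξ, d₀ ≤ ξ → |Fc d₀ ξ₀ c ξ| = G ξ := fun ξ hξ => by rw [Fc_eq hd hu hc hξ]
  have hGc : Continuous G := by
    have := Real.continuous_sinc
    fun_prop
  have hlt : ∀ ξ, d₀ ≤ ξ → ξ ≠ ξ₀ → G ξ < Fc d₀ ξ₀ c ξ₀ := by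
    intro ξ hξ hne
    rw [hF0, hG]
    simp only [abs_mul, abs_of_pos hc0]
    have hsq := Real.sqrt_nonneg (ξ - d₀)
    refine mul_lt_mul_of_pos_left (abs_sinc_sum_lt hroot hrange ?_ ?_) hc0
    · refine mul_ne_zero hc0.ne' fun h0 => hne ?_
      have := (Real.sqrt_inj (by linarith) (by linarith)).1 (sub_eq_zero.1 h0)
      linarith
    · simp only [hy, mul_sub, hcu]
      have := mul_nonneg hc0.le hsq
      linarith
  -- beyond `M` one has `y ξ ≥ 5`, hence `|F_c| ≤ c / 2`, while `F_c ξ₀ ≥ 3c / 4`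
  set M : ℝ := d₀ + (Real.sqrt (ξ₀ - d₀) + 5 / c) ^ 2 with hM
  have htail : ∀ ξ, M ≤ ξ → G ξ ≤ Fc d₀ ξ₀ c ξ₀ - c / 4 := by
    intro ξ hξ
    have h1 : Real.sqrt (ξ₀ - d₀) + 5 / c ≤ Real.sqrt (ξ - d₀) :=
      Real.le_sqrt_of_sq_le (by linarith)
    have h5 : 5 ≤ y ξ := by
      have : c * (5 / c) ≤ c * (Real.sqrt (ξ - d₀) - Real.sqrt (ξ₀ - d₀)) := by
        gcongr; linarith
      rwa [mul_div_cancel₀ _ hc0.ne'] at this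
    have i1 := sinc_le_inv (x := y ξ) (by linarith)
    have i2 := sinc_le_inv (x := y ξ + 2 * u₀) (by linarith)
    have j1 : 1 / y ξ ≤ 1 / 5 := by gcongr
    have j2 : 1 / (y ξ + 2 * u₀) ≤ 1 / 9 := by gcongr; linarith
    have := abs_add_le (Real.sinc (y ξ)) (Real.sinc (y ξ + 2 * u₀))
    rw [hF0, hG]
    simp only [abs_mul, abs_of_pos hc0]
    nlinarith
  -- on the remaining compact set `G` attains its maximum
  have hK : IsCompact (Set.Icc d₀ M ∩ {ξ | δ ≤ |ξ - ξ₀|}) :=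
    isCompact_Icc.inter_right (isClosed_le continuous_const (by fun_prop))
  obtain ⟨ε, hε, hεK⟩ : ∃ ε > 0, ∀ ξ ∈ Set.Icc d₀ M ∩ {ξ | δ ≤ |ξ - ξ₀|},
      G ξ ≤ Fc d₀ ξ₀ c ξ₀ - ε := by
    rcases (Set.Icc d₀ M ∩ {ξ | δ ≤ |ξ - ξ₀|}).eq_empty_or_nonempty with he | hne
    · exact ⟨1, one_pos, fun ξ hξ => by simp [he] at hξ⟩
    · obtain ⟨m, hm, hmax⟩ := hK.exists_isMaxOn hne hGc.continuousOn
      have hm0 : m ≠ ξ₀ := by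
        rintro rfl
        have := hm.2
        simp only [Set.mem_ofPred_eq, sub_self, abs_zero] at this
        linarith
      refine ⟨Fc d₀ ξ₀ c ξ₀ - G m, sub_pos.2 (hlt m hm.1.1 hm0), fun ξ hξ => ?_⟩
      have : G ξ ≤ G m := hmax hξ
      linarith
  refine ⟨min ε (c / 4), lt_min hε (by positivity), fun ξ hξ hδξ => ?_⟩
  rw [hFG ξ hξ]
  rcases le_total ξ M with h | h
  · have := hεK ξ ⟨⟨hξ, h⟩, hδξ⟩
    linarith [min_le_left ε (c / 4)]
  · have := htail ξ h
    linarith [min_le_right ε (c / 4)]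
end

section
/- Let d₀ ∈ ℝ, ξ₀ > d₀ and c > 0. Then there exists a constant C > 0 such that |F_c(ξ)| ≤ C/√(ξ − ξ₀) for every ξ > ξ₀ + 1. -/
/-- Let `d₀ ∈ ℝ`, `ξ₀ > d₀` and `c > 0`. Then there is `C > 0` such
that `|F_c ξ| ≤ C / √(ξ - ξ₀)` for every `ξ > ξ₀ + 1`. -/
theorem stmt14 (d₀ ξ₀ : ℝ) (hd : d₀ < ξ₀) (c : ℝ) (hc : 0 < c) :
    ∃ C : ℝ, 0 < C ∧
      ∀ ξ : ℝ, ξ₀ + 1 < ξ → |Fc d₀ ξ₀ c ξ| ≤ C / Real.sqrt (ξ - ξ₀) := by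
  refine ⟨2 * (1 + Real.sqrt (ξ₀ - d₀)), by positivity, fun ξ hξ => ?_⟩
  have hne : ξ ≠ ξ₀ := by linarith
  rw [Fc, if_neg hne]
  have ha : 0 < Real.sqrt (ξ₀ - d₀) := Real.sqrt_pos.2 (by linarith)
  have hs : 0 ≤ Real.sqrt (ξ - d₀) := Real.sqrt_nonneg _
  have hr : 1 < Real.sqrt (ξ - ξ₀) := by
    rw [Real.lt_sqrt (by norm_num)]; linarith
  have ha2 : Real.sqrt (ξ₀ - d₀) ^ 2 = ξ₀ - d₀ := Real.sq_sqrt (by linarith)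
  have hs2 : Real.sqrt (ξ - d₀) ^ 2 = ξ - d₀ := Real.sq_sqrt (by linarith)
  have hr2 : Real.sqrt (ξ - ξ₀) ^ 2 = ξ - ξ₀ := Real.sq_sqrt (by linarith)
  have has : Real.sqrt (ξ₀ - d₀) < Real.sqrt (ξ - d₀) :=
    Real.sqrt_lt_sqrt (by linarith) (by linarith)
  generalize Real.sqrt (ξ₀ - d₀) = a at *
  generalize Real.sqrt (ξ - d₀) = s at *
  generalize Real.sqrt (ξ - ξ₀) = r at *
  have hrel : (s - a) * (s + a) = r ^ 2 := by linarith [show (s - a) * (s + a) = s ^ 2 - a ^ 2 by ring]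
  have hm : 0 < s - a := by linarith
  have hp : 0 < s + a := by linarith
  -- `s² = r² + a²` gives `s ≤ r + a`, and `1 < r` absorbs the additive `a`.
  have hsr : s ≤ (1 + a) * r := by
    have : s ≤ r + a := by nlinarith
    nlinarith
  have hb : ∀ x y : ℝ, 0 < y → |Real.sin x / y| ≤ 1 / y := fun x y hy => by
    rw [abs_div, abs_of_pos hy]
    gcongr
    exact Real.abs_sin_le_one x
  calc _ ≤ |Real.sin (c * (s - a)) / (s - a)| + |Real.sin (c * (s + a)) / (s + a)| :=
        abs_add_le _ _
    _ ≤ 1 / (s - a) + 1 / (s + a) := add_le_add (hb _ _ hm) (hb _ _ hp)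
    _ = 2 * s / r ^ 2 := by
        rw [← hrel]; field_simp; ring
    _ ≤ 2 * (1 + a) / r := by
        rw [div_le_div_iff₀ (by positivity) (by positivity)]
        nlinarith [mul_le_mul_of_nonneg_right hsr (by linarith : (0:ℝ) ≤ r)]
end

section
/- Let V : [0,∞) → ℝ be locally integrable, L > 0, and ξ₁ < ξ₂ real numbers. For each ξ ∈ [ξ₁,ξ₂] let v(·,ξ) be the Neumann solution at ξ and let w(·,ξ) be the associated spectral-parameter derivative (so −∂ₓ²w + V·w = ξ·w + v(·,ξ), w(0,ξ) = ∂ₓw(0,ξ) = 0), and assume the maps ξ ↦ v(L,ξ) and ξ ↦ ∂ₓv(L,ξ) are differentiable on an open interval containing [ξ₁,ξ₂] with derivatives w(L,ξ) and ∂ₓw(L,ξ) respectively. Suppose ∂ₓv(L,ξ₁) = ∂ₓv(L,ξ₂) = 0 while ∂ₓv(L,ξ) ≠ 0 for all ξ ∈ (ξ₁,ξ₂). Then there exists ξ* ∈ (ξ₁,ξ₂) with v(L,ξ*) = 0; i.e. between consecutive zeros of ξ ↦ ∂ₓv(L,ξ) there is a zero of ξ ↦ v(L,ξ) (interlacing).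 -/
/-! The Wronskian-type quantity `w v' - w' v` vanishes at `0` and has `x`-derivative `v²`, so it
equals `∫₀ᴸ v² > 0` at `x = L` for every `ξ`; this is `wronskian_eq` and `wronskian_pos`.
Writing `f ξ = v(L,ξ)` and `g ξ = ∂ₓv(L,ξ)`, it says `f' g - g' f > 0`. At a zero of `g` this
forces `f ≠ 0`. If `f` had no zero in `(ξ₁,ξ₂)` it would thus have none in `[ξ₁,ξ₂]`, and `g / f`
would be differentiable there, zero at both end points, with derivative
`(g' f - f' g) / f² < 0` throughout, contradicting Rolle's theorem. -/

open MeasureTheory Set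

/-- The Green (Lagrange) identity `(w v' - w' v)(L) = ∫₀ᴸ v²`. The potential is merely integrable,
so the derivatives exist only almost everywhere, and the identity is obtained from the fact that
an absolutely continuous function with a.e. vanishing derivative is constant. -/
theorem wronskian_eq {V v vd w wd : ℝ → ℝ} {ξ L : ℝ} (hL : 0 < L)
    (hvdInt : IntervalIntegrable vd volume 0 L)
    (hvodeInt : IntervalIntegrable (fun t => (V t - ξ) * v t) volume 0 L)
    (hv : ∀ x : ℝ, 0 ≤ x → v x = 1 + ∫ t in (0:ℝ)..x, vd t)
    (hvd : ∀ x : ℝ, 0 ≤ x → vd x = ∫ t in (0:ℝ)..x, (V t - ξ) * v t)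
    (hwdInt : IntervalIntegrable wd volume 0 L)
    (hwodeInt : IntervalIntegrable (fun t => (V t - ξ) * w t - v t) volume 0 L)
    (hw : ∀ x : ℝ, 0 ≤ x → w x = ∫ t in (0:ℝ)..x, wd t)
    (hwd : ∀ x : ℝ, 0 ≤ x → wd x = ∫ t in (0:ℝ)..x, ((V t - ξ) * w t - v t)) :
    w L * vd L - wd L * v L = ∫ t in (0:ℝ)..L, (1 + ∫ s in (0:ℝ)..t, vd s) ^ 2 := by
  have h0 : (0:ℝ) ∈ uIcc 0 L := left_mem_uIcc
  have acv : AbsolutelyContinuousOnInterval (fun x => 1 + ∫ t in (0:ℝ)..x, vd t) 0 L :=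
    ((contDiff_const (c := (1:ℝ))).contDiffOn.absolutelyContinuousOnInterval).add
      (hvdInt.absolutelyContinuousOnInterval_intervalIntegral h0)
  have acvd := hvodeInt.absolutelyContinuousOnInterval_intervalIntegral h0
  have acw := hwdInt.absolutelyContinuousOnInterval_intervalIntegral h0
  have acwd := hwodeInt.absolutelyContinuousOnInterval_intervalIntegral h0
  have sqInt : IntervalIntegrable (fun t => (1 + ∫ s in (0:ℝ)..t, vd s) ^ 2) volume 0 L :=
    (acv.continuousOn.pow 2).intervalIntegrable
  have acsq := sqInt.absolutelyContinuousOnInterval_intervalIntegral h0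
  have ac := ((acw.mul acvd).sub (acwd.mul acv)).sub acsq
  obtain ⟨C, hC⟩ := ac.const_of_ae_hasDerivAt_zero (by
    filter_upwards [hvdInt.ae_hasDerivAt_integral, hvodeInt.ae_hasDerivAt_integral,
      hwdInt.ae_hasDerivAt_integral, hwodeInt.ae_hasDerivAt_integral,
      sqInt.ae_hasDerivAt_integral] with x h1 h2 h3 h4 h5 hx
    have hx0 : 0 ≤ x := by rw [uIcc_of_le hL.le] at hx; exact hx.1
    have := (((h3 hx 0 h0).mul (h2 hx 0 h0)).sub
      ((h4 hx 0 h0).mul ((h1 hx 0 h0).const_add 1))).sub (h5 hx 0 h0)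
    refine this.congr_deriv ?_
    simp only [← hv x hx0, ← hvd x hx0, ← hw x hx0, ← hwd x hx0]
    ring)
  have e0 := hC 0 h0
  have eL := hC L right_mem_uIcc
  simp only [Pi.sub_apply, Pi.mul_apply, intervalIntegral.integral_same] at e0 eL
  rw [← hv L hL.le, ← hvd L hL.le, ← hw L hL.le, ← hwd L hL.le] at eL
  linarith

theorem wronskian_pos {V v vd w wd : ℝ → ℝ} {ξ L : ℝ} (hL : 0 < L)
    (hvdInt : IntervalIntegrable vd volume 0 L)
    (hvodeInt : IntervalIntegrable (fun t => (V t - ξ) * v t) volume 0 L)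
    (hv : ∀ x : ℝ, 0 ≤ x → v x = 1 + ∫ t in (0:ℝ)..x, vd t)
    (hvd : ∀ x : ℝ, 0 ≤ x → vd x = ∫ t in (0:ℝ)..x, (V t - ξ) * v t)
    (hwdInt : IntervalIntegrable wd volume 0 L)
    (hwodeInt : IntervalIntegrable (fun t => (V t - ξ) * w t - v t) volume 0 L)
    (hw : ∀ x : ℝ, 0 ≤ x → w x = ∫ t in (0:ℝ)..x, wd t)
    (hwd : ∀ x : ℝ, 0 ≤ x → wd x = ∫ t in (0:ℝ)..x, ((V t - ξ) * w t - v t)) :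
    0 < w L * vd L - wd L * v L := by
  rw [wronskian_eq hL hvdInt hvodeInt hv hvd hwdInt hwodeInt hw hwd]
  have hc : ContinuousOn (fun x => 1 + ∫ t in (0:ℝ)..x, vd t) (Icc 0 L) := by
    have := (hvdInt.absolutelyContinuousOnInterval_intervalIntegral left_mem_uIcc).continuousOn
    rw [uIcc_of_le hL.le] at this
    exact continuousOn_const.add this
  -- The integrand is positive at `0` because of the initial condition `v(0) = 1`.
  exact intervalIntegral.integral_pos hL (hc.pow 2) (fun x _ => sq_nonneg _)
    ⟨0, left_mem_Icc.mpr hL.le, by simp⟩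

/-- interlacing. Let `V : [0,∞) → ℝ` be locally integrable, `L > 0`,
and `ξ₁ < ξ₂`. On an open interval `(a,b)` containing `[ξ₁,ξ₂]`, for each `ξ` let
`v (·) ξ` be the Neumann solution at `ξ` (with `x`-derivative `vd (·) ξ`) and `w (·) ξ`
the spectral-parameter derivative (with `x`-derivative `wd (·) ξ`), encoded via the
equivalent integral equations; assume `ξ ↦ v L ξ` and `ξ ↦ vd L ξ` are differentiable
with derivatives `w L ξ` and `wd L ξ`. If `vd L ξ₁ = vd L ξ₂ = 0` while `vd L ξ ≠ 0`
on `(ξ₁,ξ₂)`, then there is `ξ* ∈ (ξ₁,ξ₂)` with `v L ξ* = 0`: between consecutive zeros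
of `ξ ↦ ∂ₓv(L,ξ)` there is a zero of `ξ ↦ v(L,ξ)`. -/
theorem stmt16
    (V : ℝ → ℝ)
    (hV : ∀ x : ℝ, 0 ≤ x → IntervalIntegrable V volume 0 x)
    (L : ℝ) (hL : 0 < L)
    (ξ₁ ξ₂ : ℝ) (hξ : ξ₁ < ξ₂)
    (a b : ℝ) (hab : Icc ξ₁ ξ₂ ⊆ Ioo a b)
    (v vd w wd : ℝ → ℝ → ℝ)
    (hvdInt : ∀ ξ ∈ Ioo a b, ∀ x : ℝ, 0 ≤ x →
      IntervalIntegrable (fun t => vd t ξ) volume 0 x)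
    (hvodeInt : ∀ ξ ∈ Ioo a b, ∀ x : ℝ, 0 ≤ x →
      IntervalIntegrable (fun t => (V t - ξ) * v t ξ) volume 0 x)
    (hv : ∀ ξ ∈ Ioo a b, ∀ x : ℝ, 0 ≤ x → v x ξ = 1 + ∫ t in (0:ℝ)..x, vd t ξ)
    (hvd : ∀ ξ ∈ Ioo a b, ∀ x : ℝ, 0 ≤ x → vd x ξ = ∫ t in (0:ℝ)..x, (V t - ξ) * v t ξ)
    (hwdInt : ∀ ξ ∈ Ioo a b, ∀ x : ℝ, 0 ≤ x →
      IntervalIntegrable (fun t => wd t ξ) volume 0 x)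
    (hwodeInt : ∀ ξ ∈ Ioo a b, ∀ x : ℝ, 0 ≤ x →
      IntervalIntegrable (fun t => (V t - ξ) * w t ξ - v t ξ) volume 0 x)
    (hw : ∀ ξ ∈ Ioo a b, ∀ x : ℝ, 0 ≤ x → w x ξ = ∫ t in (0:ℝ)..x, wd t ξ)
    (hwd : ∀ ξ ∈ Ioo a b, ∀ x : ℝ, 0 ≤ x →
      wd x ξ = ∫ t in (0:ℝ)..x, ((V t - ξ) * w t ξ - v t ξ))
    (hdiffv : ∀ ξ ∈ Ioo a b, HasDerivAt (fun s => v L s) (w L ξ) ξ)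
    (hdiffvd : ∀ ξ ∈ Ioo a b, HasDerivAt (fun s => vd L s) (wd L ξ) ξ)
    (hz1 : vd L ξ₁ = 0) (hz2 : vd L ξ₂ = 0)
    (hne : ∀ ξ ∈ Ioo ξ₁ ξ₂, vd L ξ ≠ 0) :
    ∃ ξs ∈ Ioo ξ₁ ξ₂, v L ξs = 0 := by
  have key : ∀ ξ ∈ Ioo a b, 0 < w L ξ * vd L ξ - wd L ξ * v L ξ := fun ξ h =>
    wronskian_pos (V := V) (v := fun x => v x ξ) (vd := fun x => vd x ξ) (w := fun x => w x ξ)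
      (wd := fun x => wd x ξ) hL (hvdInt ξ h L hL.le) (hvodeInt ξ h L hL.le) (hv ξ h) (hvd ξ h)
      (hwdInt ξ h L hL.le) (hwodeInt ξ h L hL.le) (hw ξ h) (hwd ξ h)
  by_contra! hcon
  have hnz : ∀ ξ ∈ Icc ξ₁ ξ₂, v L ξ ≠ 0 := by
    intro ξ h hz
    have hk := key ξ (hab h)
    rcases h.1.eq_or_lt with rfl | h1
    · simp [hz, hz1] at hk
    rcases h.2.eq_or_lt with rfl | h2
    · simp [hz, hz2] at hk
    exact hcon ξ ⟨h1, h2⟩ hz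
  have hd : ∀ ξ ∈ Icc ξ₁ ξ₂, HasDerivAt (fun s => vd L s / v L s)
      ((wd L ξ * v L ξ - vd L ξ * w L ξ) / v L ξ ^ 2) ξ := fun ξ h =>
    (hdiffvd ξ (hab h)).fun_div (hdiffv ξ (hab h)) (hnz ξ h)
  obtain ⟨c, hc, hc0⟩ := exists_hasDerivAt_eq_zero hξ
    (fun ξ h => (hd ξ h).continuousAt.continuousWithinAt) (by simp [hz1, hz2])
    (fun ξ h => hd ξ (Ioo_subset_Icc_self h))
  have hc' := Ioo_subset_Icc_self hc
  have hk := key c (hab hc')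
  rcases div_eq_zero_iff.mp hc0 with h | h
  · linarith
  · exact pow_ne_zero 2 (hnz c hc') h
end
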